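/- The quotient of the group Aut(X_n^ℤ, σ_n) of automorphisms of the two-sided full shift by the central subgroup ⟨σ_n⟩ generated by the shift is isomorphic, as a group, to the transducer group L_n. -/

import Mathlib

/-!
An automorphism `f` of the full shift is a local rule, by compactness (`exists_loc`). Fix the past of
a bi-infinite sequence `x`. As the future `t` varies, the coordinates of `f x` far to the left do not
change, and there is a first coordinate which does. Reading `f x` from this coordinate on gives a map
`t ↦ hst f x t` of one-sided sequences, the local state of `f` at `x`. It depends only on finitely
many letters of the past, so `f` has finitely many local states, and they are the states of a
transducer `autT f`: reading a letter moves from one local state to the next and writes the letters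
which become determined. This transducer is synchronizing and core, and its states induce the maps
they are, which are injective with clopen image because `f` is invertible. The lengths of input and
output differ by a bounded amount, whence the Lipschitz condition.

Two weakly minimal transducers are ω-equal as soon as their states induce the same set of maps
(`omegaEq_of_range`), and the states of the product `mulT T U` induce the maps `h_q ∘ h_p` stripped
of their greatest common prefix, `(p, q)` running over the core states of `T * U` (`mul_spec`).

* Multiplicativity (`autT_comp`): the core states of the product of the transducers of `f` and `g`
  are the pairs of states reached by following `x` and `f x` (`Track.coreState`), and the
  composition of these local states, stripped of its common prefix, is a local state of `g ∘ f`.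
* Fibres (`autT_eq_iff`): shifting the output does not change the local states. Conversely, if `f`
  and `g` have the same local states, then `f x` and `g x` consist of the same letters, up to a
  displacement which is constant along `x`. It depends only on finitely many letters, so by joining
  sequences it is the same for all `x` (`const_of_invariant`).
* Surjectivity (`exists_aut`): if `T` is in `L_n` with inverse `U`, then `U` satisfies the Lipschitz
  condition too (`sl3_inverse`), so both have an annotation, that is, a potential measuring the
  difference between the lengths of output and input (`exists_annotation`). An annotation places the
  output of a transducer along `ℤ`, giving a local map `fmap` of the full shift. Since `T U` and
  `U T` are trivial, the maps of `T` and `U` are inverse to each other up to a power of the shift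
  (`comp_eq_shift`), and the local states of the map of `T` are the maps induced by the states of
  `T` (`hst_fmap`).
-/

/-!
Common definitions: transducers over a finite alphabet, strong synchronization,
cores, ω-equivalence, minimal representatives, the monoids `M_n`, `SL_n`, `SO_n`,
the groups `O_n`, `L_n`, annotations, and the two-sided full shift.

Throughout, the alphabet is `Fin (n + 2)`, i.e. an alphabet of size `n + 2 ≥ 2`.
-/

namespace ShiftPaper

/-- The alphabet with `n + 2` letters. -/
abbrev A (n : ℕ) : Type := Fin (n + 2)

/-- Finite words over the alphabet. -/
abbrev Word (n : ℕ) : Type := List (A n)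

/-- A transducer over the alphabet `A n`: a finite nonempty set of states together with a
transition function `tr` and an output function `out` (possibly asynchronous). -/
structure Transducer (n : ℕ) where
  Q : Type
  fin : Finite Q
  ne : Nonempty Q
  tr : A n → Q → Q
  out : A n → Q → Word n

variable {n : ℕ}

instance (T : Transducer n) : Finite T.Q := T.fin
instance (T : Transducer n) : Nonempty T.Q := T.ne

/-- Extended transition function, reading a finite word from left to right. -/
def dsts (T : Transducer n) : Word n → T.Q → T.Q
  | [], q => q
  | a :: w, q => dsts T w (T.tr a q)

/-- Extended output function along a finite word. -/
def outs (T : Transducer n) : Word n → T.Q → Word n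
  | [], _ => []
  | a :: w, q => T.out a q ++ outs T w (T.tr a q)

/-- Every (nonempty) circuit in the transducer has nonempty output. -/
def CircuitsNonempty (T : Transducer n) : Prop :=
  ∀ (q : T.Q) (w : Word n), w ≠ [] → dsts T w q = q → outs T w q ≠ []

/-- `T` is synchronizing at level `k`: the state reached after reading any word of
length `k` does not depend on the starting state. -/
def SyncAt (T : Transducer n) (k : ℕ) : Prop :=
  ∀ w : Word n, w.length = k → ∀ p q : T.Q, dsts T w p = dsts T w q

/-- `T` is strongly synchronizing: synchronizing at some level. -/
def StronglySync (T : Transducer n) : Prop := ∃ k, SyncAt T k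

/-- The minimal synchronizing level (junk value `0` if `T` is not strongly synchronizing). -/
noncomputable def syncLevel (T : Transducer n) : ℕ := by
  classical
  exact if h : StronglySync T then Nat.find h else 0

/-- The infinite output stream produced from state `q` on reading the infinite input `x`
(the map `h_q`).  (Well defined on transducers all of whose circuits have nonempty
output; junk values otherwise.) -/
noncomputable def hmap (T : Transducer n) (q : T.Q) (x : ℕ → A n) : ℕ → A n := fun m => by
  classical
  exact if h : ∃ k, m < (outs T ((List.range k).map x) q).length then
    (outs T ((List.range h.choose).map x) q).getD m default
  else default

/-- ω-equality of transducers: a bijection of the state sets under which corresponding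
states induce the same maps on infinite sequences. -/
def OmegaEq (T U : Transducer n) : Prop :=
  ∃ f : T.Q ≃ U.Q, ∀ q, hmap T q = hmap U (f q)

/-- The setoid on states given by ω-equivalence of states. -/
def omegaSetoid (T : Transducer n) : Setoid T.Q :=
  ⟨fun p q => hmap T p = hmap T q, ⟨fun _ => rfl, fun h => h.symm, fun h h' => h.trans h'⟩⟩

/-- The transducer obtained by identifying ω-equivalent states. -/
noncomputable def quotT (T : Transducer n) : Transducer n where
  Q := Quotient (omegaSetoid T)
  fin := Finite.of_surjective (Quotient.mk (omegaSetoid T))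
    fun c => ⟨Quotient.out c, Quotient.out_eq c⟩
  ne := ⟨Quotient.mk (omegaSetoid T) (Classical.choice T.ne)⟩
  tr := fun a c => Quotient.mk (omegaSetoid T) (T.tr a (Quotient.out c))
  out := fun a c => T.out a (Quotient.out c)

/-- `q` is a state of the core of `T`: it is forced by some word whose length is a
synchronizing level of `T`. -/
def CoreState (T : Transducer n) (q : T.Q) : Prop :=
  ∃ (k : ℕ) (w : Word n), SyncAt T k ∧ w.length = k ∧ ∀ p, dsts T w p = q

/-- `T` is core: it equals its core. -/
def IsCore (T : Transducer n) : Prop := ∀ q : T.Q, CoreState T q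

/-- Auxiliary predicate used to make the core construction total. -/
def CoreStateE (T : Transducer n) (q : T.Q) : Prop :=
  CoreState T q ∨ ∀ p, ¬ CoreState T p

/-- The core of `T` (as a transducer). -/
noncomputable def coreT (T : Transducer n) : Transducer n where
  Q := {q : T.Q // CoreStateE T q}
  fin := Subtype.finite
  ne := by
    classical
    by_cases h : ∀ p, ¬ CoreState T p
    · exact ⟨⟨Classical.choice T.ne, Or.inr h⟩⟩
    · push_neg at h
      obtain ⟨p, hp⟩ := h
      exact ⟨⟨p, Or.inl hp⟩⟩
  tr := fun a q => by
    classical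
    exact if h : CoreStateE T (T.tr a q.1) then ⟨T.tr a q.1, h⟩ else q
  out := fun a q => T.out a q.1

/-- There exist two inputs whose outputs from `q` disagree at position `j`. -/
def Disagree (T : Transducer n) (q : T.Q) (j : ℕ) : Prop :=
  ∃ x y : ℕ → A n, hmap T q x j ≠ hmap T q y j

/-- The extent of incomplete response of `q` (the length of `Λ(ε,q)`) is finite. -/
def FiniteExtent (T : Transducer n) (q : T.Q) : Prop := ∃ j, Disagree T q j

/-- The extent of incomplete response `|Λ(ε,q)|` of the state `q`
(junk value `0` when it is infinite). -/
noncomputable def extentLen (T : Transducer n) (q : T.Q) : ℕ := by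
  classical
  exact if h : FiniteExtent T q then Nat.find h else 0

/-- The word `Λ(ε,q)`: the greatest common prefix of all outputs from `q`. -/
noncomputable def extentWord (T : Transducer n) (q : T.Q) : Word n :=
  (List.range (extentLen T q)).map (hmap T q fun _ => default)

/-- `T` has no states of incomplete response (`Λ(ε,q) = ε` for every state `q`). -/
def NoIncomplete (T : Transducer n) : Prop := ∀ q : T.Q, Disagree T q 0

/-- No two distinct states of `T` are ω-equivalent. -/
def WeaklyMinimal (T : Transducer n) : Prop :=
  ∀ p q : T.Q, hmap T p = hmap T q → p = q

/-- The Lipschitz condition (SL3): around any circuit the output is as long as the input. -/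
def SL3 (T : Transducer n) : Prop :=
  ∀ (q : T.Q) (Γ : Word n), dsts T Γ q = q → (outs T Γ q).length = Γ.length

/-- `T` is synchronous: it writes exactly one letter for each letter read. -/
def Synchronous (T : Transducer n) : Prop :=
  ∀ (a : A n) (q : T.Q), (T.out a q).length = 1

/-- Boolean lexicographic comparison of words. -/
def lexLtB : Word n → Word n → Bool
  | [], [] => false
  | [], _ :: _ => true
  | _ :: _, [] => false
  | a :: u, b :: v => if a < b then true else if b < a then false else lexLtB u v

/-- The lexicographically least rotation of a word. -/
def minimalRot (w : Word n) : Word n :=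
  ((List.range w.length).map fun i => w.rotate i).foldl
    (fun acc r => if lexLtB r acc then r else acc) w

/-- A nonempty word is prime if it is not a power of a strictly shorter word. -/
def IsPrime (w : Word n) : Prop :=
  w ≠ [] ∧ ∀ (u : Word n) (k : ℕ), w = (List.replicate k u).flatten → w.length ≤ u.length

/-- `v` is a rotation of `u`. -/
def RotEq (u v : Word n) : Prop := ∃ i : ℕ, v = u.rotate i

/-- The prime word of which the (eventually constant single) image point of `T` is a power
(used for the degenerate transducers `Z_x`; junk values otherwise). -/
noncomputable def periodicRoot (T : Transducer n) : Word n := by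
  classical
  exact
    if hp : ∃ m, 0 < m ∧ ∀ j, hmap T (Classical.choice T.ne) (fun _ => default) (j + m) =
        hmap T (Classical.choice T.ne) (fun _ => default) j
    then (List.range (Nat.find hp)).map (hmap T (Classical.choice T.ne) fun _ => default)
    else [default]

/-- Remove the incomplete response from the states of `T`: replace the output `λ(a,q)` by
`Λ(a,q) - Λ(ε,q)`.  (In the degenerate case where the extents of incomplete response are
infinite, all outputs are replaced by the minimal rotation of the prime root of the unique
image point, so that minimising produces the transducer `Z_x` of the paper.) -/
noncomputable def removeIncomplete (T : Transducer n) : Transducer n where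
  Q := T.Q
  fin := T.fin
  ne := T.ne
  tr := T.tr
  out := fun a q => by
    classical
    exact if ∀ p : T.Q, FiniteExtent T p then
      (T.out a q ++ extentWord T (T.tr a q)).drop (extentLen T q)
    else minimalRot (periodicRoot T)

/-- The minimal representative `[T]` of a strongly synchronizing core transducer `T`:
remove incomplete response, take the core, and identify ω-equivalent states. -/
noncomputable def minRep (T : Transducer n) : Transducer n :=
  quotT (coreT (removeIncomplete T))

/-- The single state transducer `Z_x` which outputs `x` on every input letter. -/
def Zword (x : Word n) : Transducer n where
  Q := PUnit
  fin := inferInstance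
  ne := ⟨PUnit.unit⟩
  tr := fun _ q => q
  out := fun _ _ => x

/-- The single state identity transducer. -/
def oneT : Transducer n where
  Q := PUnit
  fin := inferInstance
  ne := ⟨PUnit.unit⟩
  tr := fun _ q => q
  out := fun a _ => [a]

/-- The product transducer `T * U`: the outputs of `T` are processed by `U`. -/
noncomputable def prodT (T U : Transducer n) : Transducer n where
  Q := T.Q × U.Q
  fin := inferInstance
  ne := ⟨⟨Classical.choice T.ne, Classical.choice U.ne⟩⟩
  tr := fun a p => (T.tr a p.1, dsts U (T.out a p.1) p.2)
  out := fun a p => outs U (T.out a p.1) p.2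

/-- The product in `M_n`: the minimal representative of the core of `T * U`. -/
noncomputable def mulT (T U : Transducer n) : Transducer n :=
  minRep (coreT (prodT T U))

/-- Membership in the monoid `M_n` of minimal, strongly synchronizing, core transducers
(a transducer is minimal if it is core, has no states of incomplete response and no two
distinct ω-equivalent states, or it is one of the degenerate transducers `Z_x` for a prime
word `x` which is least in its rotation class). -/
def MnMem (T : Transducer n) : Prop :=
  CircuitsNonempty T ∧ StronglySync T ∧ IsCore T ∧
    ((NoIncomplete T ∧ WeaklyMinimal T) ∨
      ∃ x : Word n, IsPrime x ∧ minimalRot x = x ∧ OmegaEq T (Zword x))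

/-- Membership in the monoid `SL_n`: elements of `M_n` satisfying the Lipschitz condition. -/
def SLnMem (T : Transducer n) : Prop := MnMem T ∧ SL3 T

/-- Membership in the monoid `SO_n`: elements of `M_n` all of whose states induce injective
maps with clopen image. -/
def SOnMem (T : Transducer n) : Prop :=
  MnMem T ∧ ∀ q : T.Q, Function.Injective (hmap T q) ∧ IsClopen (Set.range (hmap T q))

/-- Membership in the group `O_n`: invertible elements of `SO_n` (with inverse in `SO_n`);
equality in `M_n` is ω-equality. -/
def OnMem (T : Transducer n) : Prop :=
  SOnMem T ∧ ∃ U : Transducer n, SOnMem U ∧ OmegaEq (mulT T U) oneT ∧ OmegaEq (mulT U T) oneT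

/-- Membership in the group `L_n = O_n ∩ SL_n`. -/
def LnMem (T : Transducer n) : Prop := OnMem T ∧ SL3 T

/-- Membership in the monoid `\widetilde{P}_n` of weakly minimal, synchronous, strongly
synchronizing core transducers. -/
def PtildeMem (T : Transducer n) : Prop :=
  CircuitsNonempty T ∧ StronglySync T ∧ IsCore T ∧ Synchronous T ∧ WeaklyMinimal T

/-- The product in `\widetilde{P}_n`: take the product transducer, identify ω-equivalent
states and take the core. -/
noncomputable def ptildeMul (P R : Transducer n) : Transducer n :=
  coreT (quotT (prodT P R))

/-- An annotation of (a strongly synchronizing core transducer satisfying the Lipschitz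
condition) `T`. -/
def Annotation (T : Transducer n) (α : T.Q → ℤ) : Prop :=
  ∀ (q : T.Q) (Γ : Word n),
    α (dsts T Γ q) = α q + ((outs T Γ q).length : ℤ) - (Γ.length : ℤ)

/-! ### The two-sided full shift -/

/-- The space of bi-infinite sequences over the alphabet `A n`. -/
abbrev FullShift (n : ℕ) : Type := ℤ → A n

/-- The `i`-th power of the shift map: `(shiftZ i x) j = x (j - i)`.
The shift `σ` itself is `shiftZ 1`. -/
def shiftZ (i : ℤ) (x : FullShift n) : FullShift n := fun j => x (j - i)

/-- The monoid of endomorphisms of the shift dynamical system: continuous maps on the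
space of bi-infinite sequences commuting with the shift. -/
def EndShift (n : ℕ) : Type :=
  {f : FullShift n → FullShift n // Continuous f ∧ ∀ x, f (shiftZ 1 x) = shiftZ 1 (f x)}

/-- The group of automorphisms of the shift dynamical system: homeomorphisms of the
space of bi-infinite sequences commuting with the shift. -/
def AutShift (n : ℕ) : Type :=
  {f : FullShift n → FullShift n // Continuous f ∧ (∀ x, f (shiftZ 1 x) = shiftZ 1 (f x)) ∧
    ∃ g : FullShift n → FullShift n, Continuous g ∧ (∀ x, g (f x) = x) ∧ ∀ x, f (g x) = x}

/-- The window `x_{i-k} … x_{i-1}` of a bi-infinite sequence. -/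
def window (x : FullShift n) (i : ℤ) (k : ℕ) : Word n :=
  (List.range k).map fun j => x (i - (k : ℤ) + (j : ℤ))

/-- The state of `L` forced by the window `x_{i-k} … x_{i-1}`. -/
noncomputable def forced (L : Transducer n) (k : ℕ) (x : FullShift n) (i : ℤ) : L.Q :=
  dsts L (window x i k) (Classical.choice L.ne)

/-- The output word written while processing the letter `x i`. -/
noncomputable def outAt (L : Transducer n) (k : ℕ) (x : FullShift n) (i : ℤ) : Word n :=
  L.out (x i) (forced L k x i)

/-- The defining specification of the map `(L, α) : X_n^ℤ → X_n^ℤ` induced by an annotated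
transducer: for each index `i`, with `q` the state forced by `x_{i-k} … x_{i-1}` and
`w = λ(x_i, q)`, the word `w` occupies the coordinates `i + α q, …, i + α q + |w| - 1`
of the image sequence `y`. -/
def SpecAt (L : Transducer n) (α : L.Q → ℤ) (k : ℕ) (x y : FullShift n) : Prop :=
  ∀ (i : ℤ) (j : ℕ), j < (outAt L k x i).length →
    y (i + α (forced L k x i) + (j : ℤ)) = (outAt L k x i).getD j default

/-- The map `(L, α) : X_n^ℤ → X_n^ℤ` induced by an annotated transducer. -/
noncomputable def inducedMap (L : Transducer n) (α : L.Q → ℤ) (k : ℕ) :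
    FullShift n → FullShift n := fun x m => by
  classical
  exact if h : ∃ p : ℤ × ℕ, p.2 < (outAt L k x p.1).length ∧
      p.1 + α (forced L k x p.1) + (p.2 : ℤ) = m then
    (outAt L k x h.choose.1).getD h.choose.2 default
  else default

/-- The map `κ` from the states of `T` to the states of its minimal representative. -/
noncomputable def kappa (T : Transducer n) (q : T.Q) : (minRep T).Q := by
  classical
  exact Quotient.mk (omegaSetoid (coreT (removeIncomplete T)))
    (if h : CoreStateE (removeIncomplete T) q then
      (⟨q, h⟩ : (coreT (removeIncomplete T)).Q)
    else Classical.choice (coreT (removeIncomplete T)).ne)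

/-- The annotation `\overline{α + β}` of the product `LM` in `SL_n`: its value at the
state `κ (s, t)` is `α s + β t + |Λ(ε, (s,t))|`, the extent of incomplete response being
computed in `core (L * M)`. -/
noncomputable def annProd (L M : Transducer n) (α : L.Q → ℤ) (β : M.Q → ℤ) :
    (mulT L M).Q → ℤ := fun c =>
  α (Quotient.out c).1.1.1 + β (Quotient.out c).1.1.2 +
    (extentLen (coreT (prodT L M)) (Quotient.out c).1 : ℤ)

/-- The set `ASL_n` of annotated transducers: pairs of a transducer and an integer-valued
function on its states. -/
def ASLPair (n : ℕ) := Σ T : Transducer n, T.Q → ℤ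

/-- Membership in `ASL_n`: either the transducer is in `SL_n` with no states of incomplete
response and the function is an annotation of it, or it is a degenerate `Z_a` for a letter
`a` (whose `annotation ∞` we model by allowing an arbitrary function). -/
def ASLMem (p : ASLPair n) : Prop :=
  (SLnMem p.1 ∧ NoIncomplete p.1 ∧ Annotation p.1 p.2) ∨ ∃ a : A n, OmegaEq p.1 (Zword [a])

/-- Equality in `ASL_n`: ω-equality of the transducers matching up the annotations, with
the two elements possibly both being the degenerate `(Z_a, ∞)` for the same letter `a`. -/
def ASLEq (p q : ASLPair n) : Prop :=
  (∃ f : p.1.Q ≃ q.1.Q, (∀ s, hmap p.1 s = hmap q.1 (f s)) ∧ ∀ s, q.2 (f s) = p.2 s) ∨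
    ∃ a : A n, OmegaEq p.1 (Zword [a]) ∧ OmegaEq q.1 (Zword [a])

/-- The product on `ASL_n`: `(L, α)(M, β) = (LM, \overline{α + β})`. -/
noncomputable def ASLmul (p q : ASLPair n) : ASLPair n :=
  ⟨mulT p.1 q.1, annProd p.1 q.1 p.2 q.2⟩

/-- The identity `(1, 0)` of `ASL_n`. -/
def ASLone : ASLPair n := ⟨oneT, fun _ => 0⟩

/-- Membership in `AL_n`: annotated elements of `L_n`. -/
def ALMem (p : ASLPair n) : Prop := LnMem p.1 ∧ Annotation p.1 p.2

/-- The element `([P], α)` of `ASL_n` with `α ((q) κ) = i + |Λ(ε, q)|`, associated to the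
endomorphism `σ^i ∘ f_P`. -/
noncomputable def phiPair (P : Transducer n) (i : ℤ) : ASLPair n :=
  ⟨minRep P, fun c => i + (extentLen P (Quotient.out c).1 : ℤ)⟩

/-- The unique state at the base of a circuit labelled `Γ` (junk value if there is none). -/
noncomputable def qcirc (T : Transducer n) (Γ : Word n) : T.Q := by
  classical
  exact if h : ∃ q, dsts T Γ q = q then h.choose else Classical.choice T.ne

/-- The prime root of a word: the prime word of which `w` is a power
(junk value `w` if there is none). -/
noncomputable def primeRoot (w : Word n) : Word n := by
  classical
  exact if h : ∃ u : Word n, IsPrime u ∧ ∃ k, w = (List.replicate k u).flatten then h.choose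
  else w

/-- The action of `T ∈ M_n` on (rotation classes of) prime words: `Γ` is sent to the prime
word of which `λ(Γ, q_Γ)` is a power, where `q_Γ` is the unique state with a circuit
labelled `Γ` based at it. -/
noncomputable def PiAct (T : Transducer n) (Γ : Word n) : Word n :=
  primeRoot (outs T Γ (qcirc T Γ))

/-- The cylinder set of one-sided infinite sequences with prefix `ν`. -/
def Cyl (ν : Word n) : Set (ℕ → A n) :=
  {x | ∀ (j : ℕ) (h : j < ν.length), x j = ν.get ⟨j, h⟩}

/-- `m_q = |B(q)|`: the least cardinality of a finite set of words whose cylinders are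
contained in, and together cover, the image of `h_q`. -/
noncomputable def mq (T : Transducer n) (q : T.Q) : ℕ :=
  sInf {m : ℕ | ∃ S : Finset (Word n), S.card = m ∧
    (∀ ν ∈ S, Cyl ν ⊆ Set.range (hmap T q)) ∧
    (⋃ ν ∈ S, Cyl ν) = Set.range (hmap T q)}

/-- The signature homomorphism `sig : O_n → (ℤ/(n-1))^×`, as an element of `ℤ/(n-1)`
(for our alphabet of size `n + 2`, the modulus is `n + 1`). -/
noncomputable def sigT (T : Transducer n) : ZMod (n + 1) :=
  (mq T (Classical.choice T.ne) : ZMod (n + 1))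


/-! ### Words, streams and the maps `h_q` -/

/-- The infinite word `w · x`. -/
def app (w : Word n) (x : ℕ → A n) : ℕ → A n := fun j => w.getD j (x (j - w.length))

/-- The prefix of length `k` of `x`. -/
def tk (x : ℕ → A n) (k : ℕ) : Word n := (List.range k).map x

@[simp] lemma tk_length (x : ℕ → A n) (k : ℕ) : (tk x k).length = k := by simp [tk]

lemma tk_get (x : ℕ → A n) {k j : ℕ} (h : j < k) (d : A n) : (tk x k).getD j d = x j := by
  simp [tk, List.getD, h]

lemma app_lt {w : Word n} {j : ℕ} (h : j < w.length) (x : ℕ → A n) (d : A n) :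
    app w x j = w.getD j d := by
  simp [app, List.getD, h]

lemma app_ge {w : Word n} {j : ℕ} (h : w.length ≤ j) (x : ℕ → A n) :
    app w x j = x (j - w.length) := by
  simp [app, List.getD, h]

lemma app_add (w : Word n) (x : ℕ → A n) (j : ℕ) : app w x (w.length + j) = x j := by
  rw [app_ge (by omega)]; congr 1; omega

@[simp] lemma app_nil (x : ℕ → A n) : app [] x = x := by
  funext j; simp [app]

lemma app_append (u v : Word n) (x : ℕ → A n) : app (u ++ v) x = app u (app v x) := by
  funext j
  by_cases h : j < u.length
  · rw [app_lt h _ default, app_lt (by simp; omega) _ default, List.getD_append _ _ _ _ h]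
  · rw [app_ge (w := u) (by omega)]
    by_cases h2 : j < (u ++ v).length
    · have h3 := h2
      rw [List.length_append] at h3
      rw [app_lt h2 _ default, app_lt (by omega) _ default,
        List.getD_append_right _ _ _ _ (by omega)]
    · have h3 := h2
      rw [List.length_append] at h3
      rw [app_ge (by omega), app_ge (by omega)]
      congr 1
      rw [List.length_append]; omega

lemma app_cons (a : A n) (w : Word n) (x : ℕ → A n) : app (a :: w) x = app [a] (app w x) := by
  rw [← app_append]; rfl

lemma app_tk (x : ℕ → A n) (k : ℕ) : app (tk x k) (fun j => x (k + j)) = x := by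
  funext j
  by_cases h : j < k
  · rw [app_lt (by simpa using h) _ default, tk_get _ h]
  · rw [app_ge (by simpa using h)]; simp only [tk_length]; congr 1; omega

lemma tk_app (w : Word n) (x : ℕ → A n) : tk (app w x) w.length = w := by
  apply List.ext_getElem (by simp)
  intro j h1 h2
  have := tk_get (app w x) (k := w.length) h2 default
  rw [app_lt h2 _ default] at this
  simpa [List.getD, h1, h2] using this

lemma tk_succ (x : ℕ → A n) (k : ℕ) : tk x (k + 1) = x 0 :: tk (fun j => x (j + 1)) k := by
  simp [tk, List.range_succ_eq_map, Function.comp_def]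

lemma tk_succ' (x : ℕ → A n) (k : ℕ) : tk x (k + 1) = tk x k ++ [x k] := by
  simp [tk, List.range_succ]

lemma tk_add (x : ℕ → A n) (k l : ℕ) :
    tk x (k + l) = tk x k ++ tk (fun j => x (k + j)) l := by
  simp [tk, List.range_add, Function.comp_def]

lemma tk_cons_app (a : A n) (x : ℕ → A n) (k : ℕ) : tk (app [a] x) (k + 1) = a :: tk x k := by
  rw [tk_succ]
  congr 1

lemma app_eq_tk {x z : ℕ → A n} {w : Word n} (h : x = app w z) : w = tk x w.length := by
  rw [h, tk_app]

lemma app_inj {u : Word n} {x y : ℕ → A n} (h : app u x = app u y) : x = y := by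
  funext j
  have := congrFun h (u.length + j)
  rwa [app_add, app_add] at this

lemma length_eq_of_app {u v : Word n} (h : ∀ t, app u t = app v t) : u.length = v.length := by
  by_contra hne
  wlog hlt : u.length < v.length generalizing u v
  · exact this (fun t => (h t).symm) (Ne.symm hne) (by omega)
  have key : ∀ t : ℕ → A n, t 0 = v.getD u.length default := fun t => by
    have := congrFun (h t) u.length
    rw [app_lt hlt _ default] at this
    rw [← this, app_ge le_rfl]; simp
  have h0 := key fun _ => 0
  have h1 := key fun _ => 1
  rw [← h0] at h1
  simp at h1

lemma dsts_append (T : Transducer n) (u v : Word n) (q : T.Q) :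
    dsts T (u ++ v) q = dsts T v (dsts T u q) := by
  induction u generalizing q with
  | nil => rfl
  | cons a u ih => exact ih _

lemma outs_append (T : Transducer n) (u v : Word n) (q : T.Q) :
    outs T (u ++ v) q = outs T u q ++ outs T v (dsts T u q) := by
  induction u generalizing q with
  | nil => rfl
  | cons a u ih => simp [outs, dsts, ih]

/-- Every infinite input produces an infinite output. -/
def Productive (T : Transducer n) : Prop :=
  ∀ q x m, ∃ k, m < (outs T (tk x k) q).length

/-- The intertwining relation characterising the family `q ↦ h_q`. -/
def IsH (T : Transducer n) (F : T.Q → (ℕ → A n) → (ℕ → A n)) : Prop :=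
  ∀ q a x, F q (app [a] x) = app (T.out a q) (F (T.tr a q) x)

lemma IsH.word {T : Transducer n} {F} (hF : IsH T F) (w : Word n) (q : T.Q) (x : ℕ → A n) :
    F q (app w x) = app (outs T w q) (F (dsts T w q) x) := by
  induction w generalizing q with
  | nil => simp [outs, dsts]
  | cons a w ih => rw [app_cons, hF, ih, ← app_append]; rfl

lemma outs_tk_mono (T : Transducer n) (q : T.Q) (x : ℕ → A n) {k l : ℕ} (h : k ≤ l) :
    ∃ v, outs T (tk x l) q = outs T (tk x k) q ++ v := by
  obtain ⟨d, rfl⟩ := Nat.exists_eq_add_of_le h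
  exact ⟨_, by rw [tk_add, outs_append]⟩

lemma hmap_val {T : Transducer n} {q : T.Q} {x : ℕ → A n} {m k : ℕ}
    (h : m < (outs T (tk x k) q).length) :
    hmap T q x m = (outs T (tk x k) q).getD m default := by
  have hex : ∃ k, m < (outs T ((List.range k).map x) q).length := ⟨k, h⟩
  have e : hmap T q x m = (outs T (tk x hex.choose) q).getD m default := by
    unfold hmap; exact dif_pos hex
  rw [e]
  have h' : m < (outs T (tk x hex.choose) q).length := hex.choose_spec
  generalize hex.choose = l at h'
  rcases le_total k l with hkl | hkl
  · obtain ⟨v, hv⟩ := outs_tk_mono T q x hkl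
    rw [hv, List.getD_append _ _ _ _ h]
  · obtain ⟨v, hv⟩ := outs_tk_mono T q x hkl
    rw [hv, List.getD_append _ _ _ _ h']

lemma hmap_eq_of_isH {T : Transducer n} (hP : Productive T) {F} (hF : IsH T F) (q : T.Q) :
    hmap T q = F q := by
  funext x m
  obtain ⟨k, hk⟩ := hP q x m
  rw [hmap_val hk]
  conv_rhs => rw [← app_tk x k, hF.word, app_lt hk _ default]

lemma isH_hmap {T : Transducer n} (hP : Productive T) : IsH T (hmap T) := by
  intro q a x
  funext m
  obtain ⟨k, hk⟩ := hP (T.tr a q) x m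
  have e : outs T (tk (app [a] x) (k + 1)) q = T.out a q ++ outs T (tk x k) (T.tr a q) := by
    rw [tk_cons_app]; rfl
  rw [hmap_val (k := k + 1) (by rw [e, List.length_append]; omega), e]
  by_cases h : m < (T.out a q).length
  · rw [app_lt h _ default, List.getD_append _ _ _ _ h]
  · rw [app_ge (by omega), List.getD_append_right _ _ _ _ (by omega), hmap_val (k := k) (by omega)]

/-- Inputs agreeing on a prefix which is long enough give the same output letter. -/
lemma hmap_congr {T : Transducer n} {q : T.Q} {x y : ℕ → A n} {m k : ℕ}
    (hk : ∀ w : Word n, w.length = k → m < (outs T w q).length)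
    (h : ∀ j < k, x j = y j) : hmap T q x m = hmap T q y m := by
  have e : tk x k = tk y k := by
    simp only [tk]
    exact List.map_congr_left fun j hj => h j (by simpa using hj)
  rw [hmap_val (hk _ (tk_length x k)), hmap_val (hk _ (tk_length y k)), e]

/-- Every word of length `N` has nonempty output from every state. -/
def UniProd (T : Transducer n) (N : ℕ) : Prop :=
  ∀ (w : Word n) (q : T.Q), w.length = N → outs T w q ≠ []

lemma UniProd.len {T : Transducer n} {N : ℕ} (h : UniProd T N) (m : ℕ) (w : Word n) (q : T.Q)
    (hw : N * m ≤ w.length) : m ≤ (outs T w q).length := by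
  induction m generalizing w q with
  | zero => simp
  | succ m ih =>
    have hw' : N * m + N ≤ w.length := by rw [← Nat.mul_succ]; exact hw
    have h2 := ih (w.drop N) (dsts T (w.take N) q) (by simp; omega)
    have h1 := List.length_pos_of_ne_nil (h (w.take N) q (by simp; omega))
    have := congrArg List.length (outs_append T (w.take N) (w.drop N) q)
    rw [List.take_append_drop, List.length_append] at this
    omega

lemma UniProd.productive {T : Transducer n} {N : ℕ} (h : UniProd T N) : Productive T :=
  fun q x m => ⟨N * (m + 1), h.len (m + 1) _ q (by simp)⟩

lemma uniProd_of_circuits {T : Transducer n} (h : CircuitsNonempty T) : ∃ N, UniProd T N := by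
  refine ⟨Nat.card T.Q, fun w q hw ho => ?_⟩
  have hni : ¬ Function.Injective fun i : Fin (Nat.card T.Q + 1) => dsts T (w.take i) q := by
    intro hi
    have := Nat.card_le_card_of_injective _ hi
    simp at this
  simp only [Function.Injective, not_forall] at hni
  obtain ⟨i, j, hij, hne⟩ := hni
  wlog hlt : i < j generalizing i j
  · exact this j i hij.symm (Ne.symm hne) (lt_of_le_of_ne (not_lt.1 hlt) (Ne.symm hne))
  have hlt' : (i : ℕ) < j := hlt
  have hj := j.2
  -- `u` labels a circuit, read between the two visits of the repeated state
  set u := (w.take j).drop i with hu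
  have hs : w.take j = w.take i ++ u := by
    rw [hu]
    conv_lhs => rw [← List.take_append_drop i (w.take j)]
    rw [List.take_take, min_eq_left hlt'.le]
  have hc : dsts T u (dsts T (w.take i) q) = dsts T (w.take i) q := by
    rw [← dsts_append, ← hs]; exact hij.symm
  refine h _ u ?_ hc ?_
  · apply List.ne_nil_of_length_pos
    rw [hu]; simp; omega
  · rw [← List.take_append_drop j w, hs, List.append_assoc, outs_append, outs_append] at ho
    simp only [List.append_eq_nil_iff] at ho
    exact ho.2.1

/-! ### Removing the constant prefix of a map -/

/-- The coordinate `j` of `g s` is not constant in `s`. -/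
def NC (g : (ℕ → A n) → (ℕ → A n)) (j : ℕ) : Prop := ∃ s t, g s j ≠ g t j

/-- The length of the greatest common prefix of the values of `g`. -/
noncomputable def ext (g : (ℕ → A n) → (ℕ → A n)) : ℕ := sInf {j | NC g j}

/-- The map `g` with the greatest common prefix of its values removed. -/
noncomputable def red (g : (ℕ → A n) → (ℕ → A n)) : (ℕ → A n) → (ℕ → A n) :=
  fun t j => g t (ext g + j)

lemma ext_nc {g : (ℕ → A n) → (ℕ → A n)} (h : ∃ j, NC g j) : NC g (ext g) := Nat.sInf_mem h

lemma ext_le {g : (ℕ → A n) → (ℕ → A n)} {j : ℕ} (h : NC g j) : ext g ≤ j := Nat.sInf_le h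

lemma eq_of_lt_ext {g : (ℕ → A n) → (ℕ → A n)} {j : ℕ} (h : j < ext g) (s t : ℕ → A n) :
    g s j = g t j := by
  by_contra hne
  exact absurd (ext_le ⟨s, t, hne⟩) (by omega)

lemma ext_eq_zero {g : (ℕ → A n) → (ℕ → A n)} (h : NC g 0) : ext g = 0 := by
  have := ext_le h; omega

lemma red_of_nc {g : (ℕ → A n) → (ℕ → A n)} (h : NC g 0) : red g = g := by
  funext t j; simp [red, ext_eq_zero h]

lemma nc_red {g : (ℕ → A n) → (ℕ → A n)} (h : ∃ j, NC g j) : NC (red g) 0 := by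
  obtain ⟨s, t, hst⟩ := ext_nc h
  exact ⟨s, t, by simpa [red] using hst⟩

lemma app_red (g : (ℕ → A n) → (ℕ → A n)) (d t : ℕ → A n) :
    g t = app (tk (g d) (ext g)) (red g t) := by
  funext j
  by_cases h : j < ext g
  · rw [app_lt (by simpa using h) _ default, tk_get _ h]
    exact eq_of_lt_ext h _ _
  · rw [app_ge (by simpa using h)]
    simp only [red, tk_length]; congr 1; omega

lemma nc_of_injective {g : (ℕ → A n) → (ℕ → A n)} (h : Function.Injective g) : ∃ j, NC g j := by
  have : g (fun _ => 0) ≠ g (fun _ => 1) := fun e => by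
    have := congrFun (h e) 0
    simp at this
  obtain ⟨j, hj⟩ := Function.ne_iff.1 this
  exact ⟨j, _, _, hj⟩

lemma NC.app_left {g : (ℕ → A n) → (ℕ → A n)} {j : ℕ} (h : NC g j) (w : Word n) :
    NC (fun t => app w (g t)) (w.length + j) := by
  obtain ⟨s, t, hst⟩ := h
  exact ⟨s, t, by simpa [app_add] using hst⟩

lemma ext_app (w : Word n) {g : (ℕ → A n) → (ℕ → A n)} (h : NC g 0) :
    ext (fun t => app w (g t)) = w.length := by
  apply le_antisymm
  · simpa using ext_le (h.app_left w)
  · by_contra hlt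
    obtain ⟨s, t, hst⟩ := ext_nc ⟨_, h.app_left w⟩
    apply hst
    simp only []
    rw [app_lt (by omega) _ default, app_lt (by omega) _ default]

lemma extentLen_eq (T : Transducer n) (q : T.Q) : extentLen T q = ext (hmap T q) := by
  unfold extentLen
  split_ifs with h
  · exact (Nat.sInf_def h).symm
  · have : {j | NC (hmap T q) j} = ∅ := Set.eq_empty_iff_forall_notMem.2 fun j hj => h ⟨j, hj⟩
    simp [ext, this]

/-! ### Cores, products and minimal representatives -/

lemma SyncAt.word {T : Transducer n} {k : ℕ} (h : SyncAt T k) {w : Word n} (hw : k ≤ w.length)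
    (p q : T.Q) : dsts T w p = dsts T w q := by
  rw [← List.take_append_drop k w, dsts_append, dsts_append, h (w.take k) (by simp; omega) p q]

lemma SyncAt.mono {T : Transducer n} {k l : ℕ} (h : SyncAt T k) (hkl : k ≤ l) : SyncAt T l :=
  fun _ hw p q => h.word (by omega) p q

lemma coreState_of_word {T : Transducer n} {k : ℕ} (h : SyncAt T k) {w : Word n}
    (hw : k ≤ w.length) (p : T.Q) : CoreState T (dsts T w p) :=
  ⟨w.length, w, h.mono hw, rfl, fun _ => h.word hw _ _⟩

lemma exists_coreState {T : Transducer n} (h : StronglySync T) : ∃ q, CoreState T q := by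
  obtain ⟨k, hk⟩ := h
  exact ⟨_, coreState_of_word hk (w := List.replicate k 0) (by simp) (Classical.choice T.ne)⟩

lemma CoreState.dsts {T : Transducer n} {q : T.Q} (h : CoreState T q) (v : Word n) :
    CoreState T (dsts T v q) := by
  obtain ⟨k, w, hk, hw, hq⟩ := h
  have := coreState_of_word hk (w := w ++ v) (by simp; omega) q
  rwa [dsts_append, hq] at this

lemma coreStateE_iff {T : Transducer n} (h : StronglySync T) (q : T.Q) :
    CoreStateE T q ↔ CoreState T q := by
  obtain ⟨p, hp⟩ := exists_coreState h
  exact ⟨fun hq => hq.resolve_right fun hn => hn p hp, Or.inl⟩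

/-- The state of `T` underlying a state of its core. -/
def coreVal (T : Transducer n) (q : (coreT T).Q) : T.Q := Subtype.val q

/-- A state of `T` regarded as a state of its core. -/
def coreMk (T : Transducer n) (q : T.Q) (h : CoreState T q) : (coreT T).Q := ⟨q, Or.inl h⟩

lemma coreVal_inj {T : Transducer n} {p q : (coreT T).Q} (h : coreVal T p = coreVal T q) : p = q :=
  Subtype.ext h

lemma coreState_coreVal {T : Transducer n} (h : StronglySync T) (q : (coreT T).Q) :
    CoreState T (coreVal T q) := (coreStateE_iff h _).1 (Subtype.property q)

lemma coreT_tr {T : Transducer n} (h : StronglySync T) (a : A n) (q : (coreT T).Q) :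
    coreVal T ((coreT T).tr a q) = T.tr a (coreVal T q) := by
  classical
  have hc : CoreStateE T (T.tr a (coreVal T q)) := Or.inl ((coreState_coreVal h q).dsts [a])
  exact congrArg Subtype.val (dif_pos hc)

lemma coreT_dsts {T : Transducer n} (h : StronglySync T) (w : Word n) (q : (coreT T).Q) :
    coreVal T (dsts (coreT T) w q) = dsts T w (coreVal T q) := by
  induction w generalizing q with
  | nil => rfl
  | cons a w ih => rw [dsts, ih, coreT_tr h]; rfl

lemma coreT_outs {T : Transducer n} (h : StronglySync T) (w : Word n) (q : (coreT T).Q) :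
    outs (coreT T) w q = outs T w (coreVal T q) := by
  induction w generalizing q with
  | nil => rfl
  | cons a w ih => rw [outs, ih, coreT_tr h]; rfl

lemma coreT_productive {T : Transducer n} (h : StronglySync T) (hP : Productive T) :
    Productive (coreT T) := fun q x m => by
  obtain ⟨k, hk⟩ := hP (coreVal T q) x m
  exact ⟨k, by rwa [coreT_outs h]⟩

lemma coreT_hmap {T : Transducer n} (h : StronglySync T) (hP : Productive T) (q : (coreT T).Q) :
    hmap (coreT T) q = hmap T (coreVal T q) :=
  hmap_eq_of_isH (coreT_productive h hP) (F := fun q => hmap T (coreVal T q))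
    (fun q a x => by simp only [coreT_tr h]; exact isH_hmap hP _ a x) q

lemma coreT_syncAt {T : Transducer n} {k : ℕ} (h : SyncAt T k) : SyncAt (coreT T) k :=
  fun w hw p q => coreVal_inj (by rw [coreT_dsts ⟨k, h⟩, coreT_dsts ⟨k, h⟩, h w hw])

lemma coreT_isCore {T : Transducer n} (h : StronglySync T) : IsCore (coreT T) := by
  intro q
  obtain ⟨k, w, hk, hw, hq⟩ := coreState_coreVal h q
  exact ⟨k, w, coreT_syncAt hk, hw, fun p => coreVal_inj (by rw [coreT_dsts h, hq])⟩

lemma prodT_dsts (T U : Transducer n) (w : Word n) (p : (prodT T U).Q) :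
    dsts (prodT T U) w p = (dsts T w p.1, dsts U (outs T w p.1) p.2) := by
  induction w generalizing p with
  | nil => rfl
  | cons a w ih =>
    rw [dsts, ih]; simp only [dsts, outs, dsts_append]; rfl

lemma prodT_outs (T U : Transducer n) (w : Word n) (p : (prodT T U).Q) :
    outs (prodT T U) w p = outs U (outs T w p.1) p.2 := by
  induction w generalizing p with
  | nil => rfl
  | cons a w ih => rw [outs, ih]; simp only [outs, outs_append]; rfl

lemma prodT_productive {T U : Transducer n} {N M : ℕ} (hT : UniProd T N) (hU : UniProd U M) :
    Productive (prodT T U) := fun q x m => by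
  refine ⟨N * (M * (m + 1)), ?_⟩
  rw [prodT_outs]
  exact hU.len (m + 1) _ _ (hT.len _ _ _ (by simp))

lemma prodT_hmap {T U : Transducer n} {N M : ℕ} (hT : UniProd T N) (hU : UniProd U M)
    (p : (prodT T U).Q) : hmap (prodT T U) p = hmap U p.2 ∘ hmap T p.1 :=
  hmap_eq_of_isH (prodT_productive hT hU) (F := fun p => hmap U p.2 ∘ hmap T p.1)
    (fun p a x => by
      simp only [Function.comp]
      rw [isH_hmap hT.productive p.1, (isH_hmap hU.productive).word]; rfl) p

lemma prodT_sync {T U : Transducer n} {N : ℕ} (hN : UniProd T N) (hT : StronglySync T)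
    (hU : StronglySync U) : StronglySync (prodT T U) := by
  obtain ⟨k, hk⟩ := hT
  obtain ⟨l, hl⟩ := hU
  refine ⟨k + N * l, fun w hw p q => ?_⟩
  rw [← List.take_append_drop k w, dsts_append, dsts_append, prodT_dsts, prodT_dsts,
    prodT_dsts, prodT_dsts]
  simp only []
  rw [hk (w.take k) (by simp; omega) p.1 q.1]
  congr 1
  exact hl.word (hN.len _ _ _ (by simp; omega)) _ _

lemma drop_app (w : Word n) {e : ℕ} (h : e ≤ w.length) (x : ℕ → A n) :
    (fun j => app w x (e + j)) = app (w.drop e) x := by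
  funext j
  conv_lhs => rw [← List.take_append_drop e w, app_append]
  have : (w.take e).length = e := by simp [h]
  conv_lhs => rw [← this]
  rw [this, ← app_add (w.take e) (app (w.drop e) x) j, this]

section Remove

variable {C : Transducer n}

/-- The state of `C` underlying a state of `removeIncomplete C`. -/
def remVal (q : (removeIncomplete C).Q) : C.Q := q

lemma removeIncomplete_dsts (w : Word n) (q : (removeIncomplete C).Q) :
    remVal (dsts (removeIncomplete C) w q) = dsts C w (remVal q) := by
  induction w generalizing q with
  | nil => rfl
  | cons a w ih => exact ih _

lemma removeIncomplete_out (hC : ∀ q : C.Q, ∃ j, NC (hmap C q) j) (a : A n)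
    (q : (removeIncomplete C).Q) :
    (removeIncomplete C).out a q = (C.out a (remVal q) ++
      tk (hmap C (C.tr a (remVal q)) fun _ => default) (ext (hmap C (C.tr a (remVal q))))).drop
        (ext (hmap C (remVal q))) := by
  classical
  have e : (removeIncomplete C).out a q =
      (C.out a (remVal q) ++ extentWord C (C.tr a (remVal q))).drop (extentLen C (remVal q)) :=
    if_pos hC
  rw [e, extentWord, extentLen_eq, extentLen_eq]; rfl

lemma ext_le_out (hP : Productive C) (hC : ∀ q : C.Q, ∃ j, NC (hmap C q) j) (a : A n) (q : C.Q) :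
    ext (hmap C q) ≤ (C.out a q).length + ext (hmap C (C.tr a q)) := by
  obtain ⟨s, t, hst⟩ := (ext_nc (hC (C.tr a q))).app_left (C.out a q)
  refine ext_le ⟨app [a] s, app [a] t, ?_⟩
  rwa [isH_hmap hP, isH_hmap hP]

lemma removeIncomplete_len (hP : Productive C) (hC : ∀ q : C.Q, ∃ j, NC (hmap C q) j)
    (w : Word n) (q : (removeIncomplete C).Q) :
    (outs (removeIncomplete C) w q).length + ext (hmap C (remVal q)) =
      (outs C w (remVal q)).length + ext (hmap C (dsts C w (remVal q))) := by
  induction w generalizing q with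
  | nil => simp [outs, dsts]
  | cons a w ih =>
    have h1 := ih ((removeIncomplete C).tr a q)
    have h2 := ext_le_out hP hC a (remVal q)
    have h3 : remVal ((removeIncomplete C).tr a q) = C.tr a (remVal q) := rfl
    rw [h3] at h1
    simp only [outs, dsts, List.length_append, removeIncomplete_out hC, List.length_drop,
      tk_length]
    omega

lemma removeIncomplete_productive (hP : Productive C) (hC : ∀ q : C.Q, ∃ j, NC (hmap C q) j) :
    Productive (removeIncomplete C) := fun q x m => by
  obtain ⟨k, hk⟩ := hP (remVal q) x (m + ext (hmap C (remVal q)))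
  refine ⟨k, ?_⟩
  have := removeIncomplete_len hP hC (tk x k) q
  omega

lemma removeIncomplete_hmap (hP : Productive C) (hC : ∀ q : C.Q, ∃ j, NC (hmap C q) j)
    (q : (removeIncomplete C).Q) : hmap (removeIncomplete C) q = red (hmap C (remVal q)) :=
  hmap_eq_of_isH (removeIncomplete_productive hP hC) (F := fun q => red (hmap C (remVal q)))
    (fun q a x => by
      change red (hmap C (remVal q)) (app [a] x) = app _ (red (hmap C (C.tr a (remVal q))) x)
      rw [removeIncomplete_out hC, ← drop_app _ (by simpa using ext_le_out hP hC a (remVal q)),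
        app_append, ← app_red, ← isH_hmap hP]; rfl) q

end Remove

section Quot

variable {D : Transducer n} (hP : Productive D) (hN : ∀ q : D.Q, NC (hmap D q) 0)

include hP hN in
/-- In the absence of incomplete response the output of a state and the map induced by its
successor are determined by the map induced by the state. -/
lemma out_eq_of_hmap_eq {p q : D.Q} (h : hmap D p = hmap D q) (a : A n) :
    D.out a p = D.out a q ∧ hmap D (D.tr a p) = hmap D (D.tr a q) := by
  have key : ∀ q : D.Q, (D.out a q).length = ext fun t => hmap D q (app [a] t) := fun q => by
    simp only [isH_hmap hP q a]
    rw [ext_app _ (hN _)]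
  have ho : ∀ q : D.Q, D.out a q = tk (hmap D q (app [a] fun _ => default))
      (ext fun t => hmap D q (app [a] t)) := fun q => by
    rw [← key]
    exact app_eq_tk (isH_hmap hP q a _)
  have e : D.out a p = D.out a q := by rw [ho p, ho q, h]
  refine ⟨e, funext fun x => app_inj (u := D.out a p) ?_⟩
  rw [← isH_hmap hP p, e, ← isH_hmap hP q, h]

/-- The ω-equivalence class of a state. -/
def qmk (q : D.Q) : (quotT D).Q := Quotient.mk (omegaSetoid D) q

/-- A representative of an ω-equivalence class of states. -/
noncomputable def qout (c : (quotT D).Q) : D.Q := Quotient.out (s := omegaSetoid D) c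

lemma qmk_surjective (c : (quotT D).Q) : ∃ q : D.Q, qmk q = c := ⟨qout c, Quotient.out_eq c⟩

lemma qmk_eq {p q : D.Q} (h : hmap D p = hmap D q) : qmk p = qmk q :=
  Quotient.sound (s := omegaSetoid D) h

lemma hmap_qout (q : D.Q) : hmap D (qout (qmk q)) = hmap D q :=
  Quotient.mk_out (s := omegaSetoid D) q

include hP hN in
lemma quotT_outs (w : Word n) (q : D.Q) : outs (quotT D) w (qmk q) = outs D w q := by
  induction w generalizing q with
  | nil => rfl
  | cons a w ih =>
    obtain ⟨h1, h2⟩ := out_eq_of_hmap_eq hP hN (hmap_qout q) a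
    have e : (quotT D).tr a (qmk q) = qmk (D.tr a q) := qmk_eq h2
    rw [outs, e, ih]
    exact congrArg (· ++ outs D w (D.tr a q)) h1

include hP hN in
lemma quotT_hmap (q : D.Q) : hmap (quotT D) (qmk q) = hmap D q := by
  have hQ : Productive (quotT D) := fun c x m => by
    obtain ⟨q, rfl⟩ := qmk_surjective c
    obtain ⟨k, hk⟩ := hP q x m
    exact ⟨k, by rwa [quotT_outs hP hN]⟩
  rw [← hmap_qout q]
  refine hmap_eq_of_isH hQ (F := fun c => hmap D (qout c)) (fun c a x => ?_) _
  change hmap D (qout c) (app [a] x) =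
    app (D.out a (qout c)) (hmap D (qout (qmk (D.tr a (qout c)))) x)
  rw [hmap_qout, isH_hmap hP]

include hP hN in
lemma quotT_weaklyMinimal : WeaklyMinimal (quotT D) := by
  intro c d h
  obtain ⟨p, rfl⟩ := qmk_surjective c
  obtain ⟨q, rfl⟩ := qmk_surjective d
  rw [quotT_hmap hP hN, quotT_hmap hP hN] at h
  exact qmk_eq h

include hP hN in
lemma quotT_range : Set.range (hmap (quotT D)) = Set.range (hmap D) := by
  ext g
  constructor
  · rintro ⟨c, rfl⟩
    obtain ⟨q, rfl⟩ := qmk_surjective c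
    exact ⟨q, (quotT_hmap hP hN q).symm⟩
  · rintro ⟨q, rfl⟩
    exact ⟨_, quotT_hmap hP hN q⟩

end Quot

/-- The properties of a transducer under which its products can be computed on the level of the
maps induced by its states. -/
structure Nice (T : Transducer n) : Prop where
  sync : StronglySync T
  prod : ∃ N, UniProd T N
  inj : ∀ q, Function.Injective (hmap T q)

lemma minRep_spec {C : Transducer n} (hs : StronglySync C) (hc : IsCore C) (hP : Productive C)
    (hC : ∀ q : C.Q, ∃ j, NC (hmap C q) j) :
    WeaklyMinimal (minRep C) ∧
      Set.range (hmap (minRep C)) = Set.range fun q => red (hmap C q) := by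
  obtain ⟨k, hk⟩ := hs
  have hRs : ∀ {l}, SyncAt C l → SyncAt (removeIncomplete C) l := fun {l} hl w hw p q => by
    have := hl w hw (remVal p) (remVal q)
    rwa [← removeIncomplete_dsts, ← removeIncomplete_dsts] at this
  have hR : StronglySync (removeIncomplete C) := ⟨k, hRs hk⟩
  have hRc : IsCore (removeIncomplete C) := fun q => by
    obtain ⟨l, w, hl, hw, hq⟩ := hc q
    exact ⟨l, w, hRs hl, hw, fun p => (removeIncomplete_dsts w p).trans (hq _)⟩
  have hRP := removeIncomplete_productive hP hC
  have hDP := coreT_productive hR hRP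
  have hD : ∀ q : (coreT (removeIncomplete C)).Q, 
      hmap _ q = red (hmap C (remVal (coreVal _ q))) := fun q => by
    rw [coreT_hmap hR hRP, removeIncomplete_hmap hP hC]
  have hDN : ∀ q : (coreT (removeIncomplete C)).Q, NC (hmap _ q) 0 := fun q => by
    rw [hD]; exact nc_red (hC _)
  refine ⟨quotT_weaklyMinimal hDP hDN, (quotT_range hDP hDN).trans ?_⟩
  ext g
  constructor
  · rintro ⟨q, rfl⟩
    exact ⟨_, (hD q).symm⟩
  · rintro ⟨q, rfl⟩
    exact ⟨coreMk _ q (hRc q), hD _⟩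

/-- The maps induced by the states of `TU` are the reductions of the maps `h_q ∘ h_p`, for
`(p, q)` a state of the core of `T * U`. -/
lemma mul_spec {T U : Transducer n} (hT : Nice T) (hU : Nice U) :
    WeaklyMinimal (mulT T U) ∧
      Set.range (hmap (mulT T U)) = {g | ∃ c : (prodT T U).Q, CoreState (prodT T U) c ∧
        red (hmap U c.2 ∘ hmap T c.1) = g} := by
  obtain ⟨N, hN⟩ := hT.prod
  obtain ⟨M, hM⟩ := hU.prod
  have hs := prodT_sync hN hT.sync hU.sync
  have hP := prodT_productive hN hM
  have hC : ∀ c : (coreT (prodT T U)).Q, 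
      hmap _ c = hmap U (coreVal _ c).2 ∘ hmap T (coreVal _ c).1 := fun c => by
    rw [coreT_hmap hs hP, prodT_hmap hN hM]
  have hs' : StronglySync (coreT (prodT T U)) := hs.imp fun _ h => coreT_syncAt h
  have h := minRep_spec hs' (coreT_isCore hs) (coreT_productive hs hP)
    (fun c => by rw [hC]; exact nc_of_injective ((hU.inj _).comp (hT.inj _)))
  refine ⟨h.1, h.2.trans ?_⟩
  ext g
  constructor
  · rintro ⟨c, rfl⟩
    exact ⟨coreVal _ c, coreState_coreVal hs c, by simp only [hC]⟩
  · rintro ⟨c, hc, rfl⟩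
    exact ⟨coreMk _ c hc, by simp only [hC]; rfl⟩

/-! ### ω-equality -/

lemma OmegaEq.range {T U : Transducer n} (h : OmegaEq T U) :
    Set.range (hmap T) = Set.range (hmap U) := by
  obtain ⟨f, hf⟩ := h
  have : hmap T = hmap U ∘ f := funext hf
  rw [this, f.surjective.range_comp]

/-- Weakly minimal transducers are determined by the set of maps induced by their states. -/
lemma omegaEq_of_range {T U : Transducer n} (hT : WeaklyMinimal T) (hU : WeaklyMinimal U)
    (h : Set.range (hmap T) = Set.range (hmap U)) : OmegaEq T U := by
  have h1 : ∀ q, ∃ p, hmap U p = hmap T q := fun q => by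
    have : hmap T q ∈ Set.range (hmap U) := h ▸ ⟨q, rfl⟩
    exact this
  have h2 : ∀ p, ∃ q, hmap T q = hmap U p := fun p => by
    have : hmap U p ∈ Set.range (hmap T) := h ▸ ⟨p, rfl⟩
    exact this
  choose f hf using h1
  choose g hg using h2
  exact ⟨⟨f, g, fun q => hT _ _ (by rw [hg, hf]), fun p => hU _ _ (by rw [hf, hg])⟩,
    fun q => (hf q).symm⟩

lemma oneT_weaklyMinimal : WeaklyMinimal (oneT (n := n)) := fun _ _ _ => rfl

lemma oneT_range : Set.range (hmap (oneT (n := n))) = {id} := by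
  have hu : UniProd (oneT (n := n)) 1 := by
    intro w q hw
    match w, hw with
    | [a], _ => simp [outs, oneT]
  have : ∀ q, hmap (oneT (n := n)) q = id :=
    hmap_eq_of_isH hu.productive (F := fun _ => id) fun q a x => rfl
  ext g
  constructor
  · rintro ⟨q, rfl⟩; exact this q
  · rintro rfl; exact ⟨PUnit.unit, this _⟩

/-! ### Local maps of the full shift -/

/-- The bi-infinite sequence with the past of `x` and the future `t`. -/
def join (x : FullShift n) (t : ℕ → A n) : FullShift n := fun i => if i < 0 then x i else t i.toNat

/-- The one-sided sequence `x_i x_{i+1} …`. -/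
def tail (x : FullShift n) (i : ℤ) : ℕ → A n := fun j => x (i + j)

/-- `f` is a local rule of radius `r` (around each coordinate). -/
def Loc (f : FullShift n → FullShift n) (r : ℕ) : Prop :=
  ∀ x y (m : ℤ), (∀ i : ℤ, m - r ≤ i → i ≤ m + r → x i = y i) → f x m = f y m

/-- `f` commutes with all powers of the shift. -/
def Comm (f : FullShift n → FullShift n) : Prop := ∀ i x, f (shiftZ i x) = shiftZ i (f x)

lemma shiftZ_shiftZ (i j : ℤ) (x : FullShift n) : shiftZ i (shiftZ j x) = shiftZ (i + j) x := by
  funext m; simp only [shiftZ]; congr 1; ring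

@[simp] lemma shiftZ_zero (x : FullShift n) : shiftZ 0 x = x := by
  funext m; simp [shiftZ]

lemma continuous_shiftZ (i : ℤ) : Continuous (shiftZ (n := n) i) :=
  continuous_pi fun _ => continuous_apply _

lemma comm_of_shift {f : FullShift n → FullShift n} (h : ∀ x, f (shiftZ 1 x) = shiftZ 1 (f x)) :
    Comm f := by
  have hneg : ∀ x, f (shiftZ (-1) x) = shiftZ (-1) (f x) := fun x => by
    have := h (shiftZ (-1) x)
    rw [shiftZ_shiftZ] at this
    simp only [add_neg_cancel, shiftZ_zero] at this
    rw [this, shiftZ_shiftZ]; simp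
  intro i
  induction i using Int.induction_on with
  | zero => simp
  | succ i ih => intro x; rw [add_comm, ← shiftZ_shiftZ, h, ih, shiftZ_shiftZ]
  | pred i ih =>
    intro x
    rw [sub_eq_add_neg, add_comm, ← shiftZ_shiftZ, hneg, ih, shiftZ_shiftZ]

lemma Loc.continuous {f : FullShift n → FullShift n} {r : ℕ} (h : Loc f r) : Continuous f := by
  refine continuous_pi fun m => ?_
  let I := Set.Icc (m - r) (m + r)
  have : (fun x => f x m) =
      (fun w : I → A n => f (fun i => if hi : i ∈ I then w ⟨i, hi⟩ else default) m) ∘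
        fun x (i : I) => x i := by
    funext x
    refine h _ _ m fun i h1 h2 => ?_
    have : i ∈ I := ⟨h1, h2⟩
    simp [this]
  rw [this]
  exact continuous_of_discreteTopology.comp (continuous_pi fun i => continuous_apply _)

lemma Loc.mono {f : FullShift n → FullShift n} {r s : ℕ} (h : Loc f r) (hrs : r ≤ s) : Loc f s :=
  fun x y m hxy => h x y m fun i h1 h2 => hxy i (by omega) (by omega)

/-- The theorem of Curtis, Hedlund and Lyndon: by compactness, a continuous map commuting with the
shift is given by a local rule. -/
lemma exists_loc {f : FullShift n → FullShift n} (hf : Continuous f) (hc : Comm f) :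
    ∃ r, Loc f r := by
  let V : ℕ → Set (FullShift n × FullShift n) := fun r =>
    {p | (∀ i : ℤ, -(r : ℤ) ≤ i → i ≤ r → p.1 i = p.2 i) ∧ f p.1 0 ≠ f p.2 0}
  have hV : ∀ r, IsClosed (V r) := fun r => by
    have h1 : IsClosed {p : FullShift n × FullShift n |
        ∀ i : ℤ, -(r : ℤ) ≤ i → i ≤ r → p.1 i = p.2 i} := by
      simp only [Set.ofPred_forall]
      refine isClosed_iInter fun i => isClosed_iInter fun _ => isClosed_iInter fun _ => ?_
      exact isClosed_eq (by fun_prop) (by fun_prop)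
    have h2 : Continuous fun p : FullShift n × FullShift n => (f p.1 0, f p.2 0) := by
      fun_prop
    have h3 : IsClosed ((fun p : FullShift n × FullShift n => (f p.1 0, f p.2 0)) ⁻¹'
        {q | q.1 ≠ q.2}) := (isClosed_discrete _).preimage h2
    exact h1.inter h3
  by_contra hne
  push Not at hne
  have hVne : ∀ r, (V r).Nonempty := fun r => by
    have := hne r
    simp only [Loc, not_forall] at this
    obtain ⟨x, y, m, hxy, hm⟩ := this
    refine ⟨(shiftZ (-m) x, shiftZ (-m) y), fun i h1 h2 => hxy _ (by omega) (by omega), ?_⟩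
    simp only [hc _ _]
    simpa [shiftZ] using hm
  obtain ⟨p, hp⟩ := IsCompact.nonempty_iInter_of_directed_nonempty_isCompact_isClosed V
    (directed_of_isDirected_le fun r s hrs p hp =>
      ⟨fun i h1 h2 => hp.1 i (by omega) (by omega), hp.2⟩) hVne
    (fun r => (hV r).isCompact) hV
  have hp' : ∀ r, p ∈ V r := Set.mem_iInter.1 hp
  refine (hp' 0).2 ?_
  have : p.1 = p.2 := by
    funext i
    exact (hp' i.natAbs).1 i (by omega) (by omega)
  rw [this]

/-- `f` and `g` are mutually inverse automorphisms of the shift given by local rules of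
radius `r`. -/
structure Good (f g : FullShift n → FullShift n) (r : ℕ) : Prop where
  lf : Loc f r
  lg : Loc g r
  cf : Comm f
  cg : Comm g
  gf : ∀ x, g (f x) = x
  fg : ∀ x, f (g x) = x

lemma Good.symm {f g : FullShift n → FullShift n} {r : ℕ} (h : Good f g r) : Good g f r :=
  ⟨h.lg, h.lf, h.cg, h.cf, h.fg, h.gf⟩

lemma exists_good (f : AutShift n) : ∃ g r, Good f.1 g r := by
  obtain ⟨hf, hc, g, hg, hgf, hfg⟩ := f.2
  have hcf := comm_of_shift hc
  have hcg : Comm g := fun i x => by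
    conv_lhs => rw [← hfg x, ← hcf, hgf]
  obtain ⟨r, hr⟩ := exists_loc hf hcf
  obtain ⟨s, hs⟩ := exists_loc hg hcg
  exact ⟨g, max r s, hr.mono (le_max_left _ _), hs.mono (le_max_right _ _), hcf, hcg, hgf, hfg⟩

/-- The automorphism of the shift underlying a pair of mutually inverse local rules. -/
def Good.toAut {f g : FullShift n → FullShift n} {r : ℕ} (h : Good f g r) : AutShift n :=
  ⟨f, h.lf.continuous, h.cf 1, g, h.lg.continuous, h.gf, h.fg⟩

/-! ### Families of bi-infinite sequences -/

/-- The least coordinate of `F t` which is not constant in `t`. -/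
noncomputable def MZ (F : (ℕ → A n) → FullShift n) : ℤ := sInf {m | ∃ s t, F s m ≠ F t m}

/-- The map `t ↦ F t`, started at the first nonconstant coordinate. -/
noncomputable def redZ (F : (ℕ → A n) → FullShift n) : (ℕ → A n) → (ℕ → A n) :=
  fun t => tail (F t) (MZ F)

lemma MZ_mem {F : (ℕ → A n) → FullShift n} {c : ℤ} (hc : ∀ m s t, F s m ≠ F t m → c ≤ m)
    (hne : ∃ m s t, F s m ≠ F t m) : ∃ s t, F s (MZ F) ≠ F t (MZ F) :=
  Int.csInf_mem (s := {m | ∃ s t, F s m ≠ F t m}) hne ⟨c, fun m ⟨s, t, h⟩ => hc m s t h⟩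

lemma MZ_le {F : (ℕ → A n) → FullShift n} {c : ℤ} (hc : ∀ m s t, F s m ≠ F t m → c ≤ m)
    {m : ℤ} {s t} (h : F s m ≠ F t m) : MZ F ≤ m :=
  csInf_le ⟨c, fun m ⟨s, t, h⟩ => hc m s t h⟩ ⟨s, t, h⟩

/-- The first nonconstant coordinate can be found after cutting at any coordinate `c` before
which the family is constant. -/
lemma redZ_eq {F : (ℕ → A n) → FullShift n} {c : ℤ} (hc : ∀ m s t, F s m ≠ F t m → c ≤ m)
    (hne : ∃ m s t, F s m ≠ F t m) :
    MZ F = c + ext (fun t => tail (F t) c) ∧ red (fun t => tail (F t) c) = redZ F := by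
  obtain ⟨s, t, hst⟩ := MZ_mem hc hne
  have hcM := hc _ _ _ hst
  have hnc : NC (fun t => tail (F t) c) (MZ F - c).toNat := by
    refine ⟨s, t, ?_⟩
    simp only [tail]
    rwa [show c + ((MZ F - c).toNat : ℤ) = MZ F by omega]
  have h1 := ext_le hnc
  obtain ⟨s', t', h'⟩ := ext_nc ⟨_, hnc⟩
  have h2 := MZ_le hc h'
  have e : MZ F = c + ext (fun t => tail (F t) c) := by omega
  refine ⟨e, ?_⟩
  funext t j
  simp only [red, redZ, tail, e]
  congr 1; push_cast; ring

lemma ext_redZ {F : (ℕ → A n) → FullShift n} {c : ℤ} (hc : ∀ m s t, F s m ≠ F t m → c ≤ m)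
    (hne : ∃ m s t, F s m ≠ F t m) : NC (redZ F) 0 := by
  obtain ⟨s, t, hst⟩ := MZ_mem hc hne
  exact ⟨s, t, by simpa [redZ, tail] using hst⟩

lemma redZ_shift {F : (ℕ → A n) → FullShift n} {c : ℤ} (hc : ∀ m s t, F s m ≠ F t m → c ≤ m)
    (hne : ∃ m s t, F s m ≠ F t m) (d : ℤ) :
    MZ (fun t => shiftZ d (F t)) = MZ F + d ∧ redZ (fun t => shiftZ d (F t)) = redZ F := by
  have e : (fun t => tail (shiftZ d (F t)) (MZ F + d)) = redZ F := by
    funext t j; simp only [tail, shiftZ, redZ]; congr 1; ring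
  have h := redZ_eq (F := fun t => shiftZ d (F t)) (c := MZ F + d)
    (fun m s t h => by have := MZ_le hc h; omega)
    (by obtain ⟨m, s, t, h⟩ := hne
        exact ⟨m + d, s, t, by simpa [shiftZ] using h⟩)
  rw [e, red_of_nc (ext_redZ hc hne), ext_eq_zero (ext_redZ hc hne)] at h
  exact ⟨by simpa using h.1, h.2.symm⟩

/-! ### The local states of a map of the full shift -/

/-- The map `t ↦ f (x · t)` for the past `x`, started at the first coordinate which is not
determined by the past. -/
noncomputable def hst (f : FullShift n → FullShift n) (x : FullShift n) :
    (ℕ → A n) → (ℕ → A n) := redZ fun t => f (join x t)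

/-- The first coordinate of `f x` not determined by the past of `x`. -/
noncomputable def mst (f : FullShift n → FullShift n) (x : FullShift n) : ℤ :=
  MZ fun t => f (join x t)

/-- The local state of `f` at time `i`. -/
noncomputable def sst (f : FullShift n → FullShift n) (x : FullShift n) (i : ℤ) :
    (ℕ → A n) → (ℕ → A n) := hst f (shiftZ (-i) x)

/-- The first coordinate of `f x` not determined by the coordinates of `x` before `i`. -/
noncomputable def cst (f : FullShift n → FullShift n) (x : FullShift n) (i : ℤ) : ℤ :=
  i + mst f (shiftZ (-i) x)

lemma join_self (x : FullShift n) : join x (tail x 0) = x := by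
  funext i
  simp only [join, tail]
  split_ifs with h
  · rfl
  · congr 1; omega

lemma join_neg {x : FullShift n} {i : ℤ} (h : i < 0) (t : ℕ → A n) : join x t i = x i := by
  simp [join, h]

lemma join_nonneg {x : FullShift n} (i : ℕ) (t : ℕ → A n) : join x t i = t i := by
  simp [join]

lemma join_congr {x y : FullShift n} (h : ∀ i < 0, x i = y i) (t : ℕ → A n) :
    join x t = join y t := by
  funext i
  simp only [join]
  split_ifs with hi
  · exact h i hi
  · rfl

lemma tail_join (x : FullShift n) (t : ℕ → A n) : tail (join x t) 0 = t := by
  funext j; simp [tail, join]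

lemma tail_succ (x : FullShift n) (i : ℤ) : tail x i = app [x i] (tail x (i + 1)) := by
  funext j
  cases j with
  | zero => simp [tail, app]
  | succ j => simp only [tail, app]; simp; congr 1; ring

lemma tail_add (x : FullShift n) (i : ℤ) (k : ℕ) :
    tail x i = app (tk (tail x i) k) (tail x (i + k)) := by
  conv_lhs => rw [← app_tk (tail x i) k]
  congr 1
  funext j; simp only [tail]; congr 1; push_cast; ring

lemma tail_shift (x : FullShift n) (i j : ℤ) : tail (shiftZ i x) j = tail x (j - i) := by
  funext k; simp only [tail, shiftZ]; congr 1; ring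

lemma join_cons (x : FullShift n) (t : ℕ → A n) :
    join (shiftZ (-1) x) t = shiftZ (-1) (join x (app [x 0] t)) := by
  funext i
  simp only [join, shiftZ]
  rcases lt_trichotomy i (-1) with h | h | h
  · rw [if_pos (by omega), if_pos (by omega)]
  · subst h; simp [app]
  · rw [if_neg (by omega), if_neg (by omega), app_ge (by simp; omega)]
    congr 1; simp; omega

section

variable {f g : FullShift n → FullShift n} {r : ℕ} (G : Good f g r)

include G

lemma Good.injective : Function.Injective f := fun x y h => by rw [← G.gf x, h, G.gf]

lemma Good.lower (x : FullShift n) (m : ℤ) (s t : ℕ → A n)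
    (h : f (join x s) m ≠ f (join x t) m) : -r ≤ m := by
  by_contra hlt
  exact h (G.lf _ _ _ fun i _ h2 => by rw [join_neg (by omega), join_neg (by omega)])

/-- Pasts with different futures are separated by `f`, even when the futures share a prefix. -/
lemma Good.exists_ne (x : FullShift n) (w : Word n) :
    ∃ m s t, f (join x (app w s)) m ≠ f (join x (app w t)) m := by
  by_contra hne
  push Not at hne
  have h : join x (app w fun _ => 0) = join x (app w fun _ => 1) :=
    G.injective (funext fun m => hne m _ _)
  have := app_inj (by simpa only [tail_join] using congrArg (fun z => tail z 0) h)
  simpa using congrFun this 0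

lemma Good.exists_ne' (x : FullShift n) : ∃ m s t, f (join x s) m ≠ f (join x t) m := by
  simpa using G.exists_ne x []

lemma Good.lt_mst {x : FullShift n} {m : ℤ} (h : m < mst f x) (s t : ℕ → A n) :
    f (join x s) m = f (join x t) m := by
  by_contra hne
  have : mst f x ≤ m := MZ_le (G.lower x) hne
  omega

lemma Good.mst_lower (x : FullShift n) : -r ≤ mst f x := by
  obtain ⟨s, t, h⟩ := MZ_mem (G.lower x) (G.exists_ne' x)
  exact G.lower _ _ _ _ h

/-- The coordinate `0` of `x` can be recovered from the coordinates of `f x` up to `r`. -/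
lemma Good.mst_upper (x : FullShift n) : mst f x ≤ r := by
  by_contra hlt
  have h : g (f (join x fun _ => 0)) 0 = g (f (join x fun _ => 1)) 0 :=
    G.lg _ _ _ fun i _ h2 => G.lt_mst (by omega) _ _
  rw [G.gf, G.gf] at h
  simp [join] at h

lemma Good.hst_nc (x : FullShift n) : NC (hst f x) 0 := ext_redZ (G.lower x) (G.exists_ne' x)

/-- The local state only depends on the last `2 r` letters of the past. -/
lemma Good.congr {x y : FullShift n} (h : ∀ i, -(2 * r : ℤ) ≤ i → i < 0 → x i = y i) :
    hst f x = hst f y ∧ mst f x = mst f y := by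
  have e : ∀ m : ℤ, -r ≤ m → ∀ t, f (join x t) m = f (join y t) m := fun m hm t =>
    G.lf _ _ _ fun i h1 _ => by
      simp only [join]
      split_ifs with hi
      · exact h i (by omega) hi
      · rfl
  have key : (fun t => tail (f (join x t)) (-r)) = fun t => tail (f (join y t)) (-r) := by
    funext t j
    exact e _ (by omega) t
  have hx := redZ_eq (G.lower x) (G.exists_ne' x)
  have hy := redZ_eq (G.lower y) (G.exists_ne' y)
  rw [key] at hx
  exact ⟨hx.2.symm.trans hy.2, hx.1.trans hy.1.symm⟩

lemma Good.congr_past {x y : FullShift n} (h : ∀ i < 0, x i = y i) :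
    hst f x = hst f y ∧ mst f x = mst f y := G.congr fun i _ hi => h i hi

lemma Good.sst_congr {x y : FullShift n} {i : ℤ} (h : ∀ j, i - 2 * r ≤ j → j < i → x j = y j) :
    sst f x i = sst f y i ∧ cst f x i = cst f y i := by
  have := G.congr (x := shiftZ (-i) x) (y := shiftZ (-i) y)
    fun j h1 h2 => h _ (by omega) (by omega)
  exact ⟨this.1, congrArg (i + ·) this.2⟩

lemma Good.val (x : FullShift n) (i : ℤ) : tail (f x) (cst f x i) = sst f x i (tail x i) := by
  have e : join (shiftZ (-i) x) (tail x i) = shiftZ (-i) x := by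
    have := join_self (shiftZ (-i) x)
    rwa [tail_shift, zero_sub, neg_neg] at this
  simp only [sst, hst, redZ]
  rw [e, G.cf, tail_shift]
  congr 1
  simp only [cst, mst]; ring

/-- The local states evolve by removing the greatest common prefix after reading a letter, and the
length of this prefix is the displacement of the output. -/
lemma Good.step (x : FullShift n) (i : ℤ) :
    red (fun t => sst f x i (app [x i] t)) = sst f x (i + 1) ∧
      cst f x (i + 1) = cst f x i + ext (fun t => sst f x i (app [x i] t)) := by
  set y := shiftZ (-i) x with hy
  have hy0 : x i = y 0 := by simp [hy, shiftZ]
  have hy1 : shiftZ (-(i + 1)) x = shiftZ (-1) y := by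
    rw [hy, shiftZ_shiftZ]; congr 1; ring
  have hlow : ∀ m s t, f (join y (app [y 0] s)) m ≠ f (join y (app [y 0] t)) m →
      mst f y ≤ m := fun m s t h => MZ_le (G.lower y) h
  have h1 := redZ_eq (F := fun t => f (join y (app [y 0] t))) hlow (G.exists_ne y _)
  have h2 := redZ_shift (F := fun t => f (join y (app [y 0] t))) hlow (G.exists_ne y _) (-1)
  have e : (fun t => f (join (shiftZ (-1) y) t)) =
      fun t => shiftZ (-1) (f (join y (app [y 0] t))) := by
    funext t; rw [join_cons, G.cf]
  simp only [sst, cst, ← hy, hy1, hy0]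
  rw [← e] at h2
  constructor
  · exact h1.2.trans h2.2.symm
  · have h3 : mst f (shiftZ (-1) y) = _ := h2.1
    have h4 : _ = mst f y + (ext fun t => hst f y (app [y 0] t) : ℤ) := h1.1
    rw [h3, h4]; ring

/-- The sequence `f (x · t)` splits at the first coordinate not determined by `x`. -/
lemma Good.split (x : FullShift n) (t : ℕ → A n) :
    f (join x t) = shiftZ (mst f x) (join (shiftZ (-mst f x) (f x)) (hst f x t)) := by
  funext m
  simp only [shiftZ, join, hst, redZ, tail]
  split_ifs with h
  · rw [G.lt_mst (t := tail x 0) (by omega), join_self]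
    congr 1; ring
  · congr 1
    have : MZ (fun t => f (join x t)) = mst f x := rfl
    omega

lemma Good.hst_injective (x : FullShift n) : Function.Injective (hst f x) := fun s t h => by
  have e : f (join x s) = f (join x t) := by rw [G.split, h, ← G.split]
  simpa only [tail_join] using congrArg (fun z => tail z 0) (G.injective e)

/-- The image of a local state is cut out by finitely many conditions on the inverse map. -/
lemma Good.hst_clopen (x : FullShift n) : IsClopen (Set.range (hst f x)) := by
  let V : (ℕ → A n) → FullShift n := fun y =>
    shiftZ (mst f x) (join (shiftZ (-mst f x) (f x)) y)
  have hVc : Continuous V := by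
    refine (continuous_shiftZ _).comp (continuous_pi fun i => ?_)
    by_cases h : i < 0
    · simp only [join, h, if_true]; exact continuous_const
    · simp only [join, h, if_false]; exact continuous_apply _
  have hV : ∀ y (j : ℕ), V y (mst f x + j) = y j := fun y j => by simp [V, shiftZ, join]
  have hVn : ∀ y m, m < mst f x → V y m = f x m := fun y m h => by
    simp only [V, shiftZ, join]
    rw [if_pos (by omega)]; congr 1; ring
  have key : Set.range (hst f x) =
      ⋂ i ∈ Set.Ico (-(2 * r : ℤ)) 0, {y | g (V y) i ∈ ({x i} : Set (A n))} := by
    ext y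
    simp only [Set.mem_iInter, Set.mem_ofPred_eq, Set.mem_singleton_iff, Set.mem_range, Set.mem_Ico]
    constructor
    · rintro ⟨t, rfl⟩ i hi
      change g (shiftZ _ _) i = _
      rw [← G.split, G.gf, join_neg hi.2]
    · intro h
      have hneg : ∀ i < 0, g (V y) i = x i := fun i hi => by
        by_cases h2 : -(2 * r : ℤ) ≤ i
        · exact h i ⟨h2, hi⟩
        · rw [← G.gf x]
          have := G.mst_lower x
          exact G.lg _ _ _ fun j _ hj => hVn _ _ (by omega)
      refine ⟨tail (g (V y)) 0, ?_⟩
      have e : f (join x (tail (g (V y)) 0)) = V y := by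
        rw [← join_congr hneg, join_self, G.fg]
      funext j
      have : hst f x (tail (g (V y)) 0) j = f (join x (tail (g (V y)) 0)) (mst f x + j) := rfl
      rw [this, e, hV]
  rw [key]
  refine (Set.finite_Ico _ _).isClopen_biInter fun i _ => ?_
  exact (isClopen_discrete _).preimage
    ((continuous_apply i).comp (G.lg.continuous.comp hVc))

/-- The local states of a composition. -/
lemma Good.comp_sst {f' g' : FullShift n → FullShift n} {r' r'' : ℕ} (G' : Good f' g' r')
    {h h' : FullShift n → FullShift n} (H : Good h h' r'') (hh : ∀ x, h x = f' (f x))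
    (x : FullShift n) (i : ℤ) :
    red (sst f' (f x) (cst f x i) ∘ sst f x i) = sst h x i := by
  set y := shiftZ (-i) x with hy
  set z := shiftZ (-mst f y) (f y) with hz
  have hz' : shiftZ (-cst f x i) (f x) = z := by
    rw [hz, hy, G.cf, shiftZ_shiftZ]; congr 1; simp only [cst]; ring
  have e : ∀ t, h (join y t) = shiftZ (mst f y) (f' (join z (hst f y t))) := fun t => by
    rw [hh, G.split, G'.cf]
  have hlow : ∀ m s t, h (join y s) m ≠ h (join y t) m → mst f y + mst f' z ≤ m :=
    fun m s t hst => by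
      rw [e, e] at hst
      have : mst f' z ≤ _ := MZ_le (G'.lower z) hst
      omega
  have := (redZ_eq hlow (H.exists_ne' y)).2
  simp only [sst, hz', ← hy]
  refine Eq.trans ?_ this
  congr 1
  funext t
  rw [e, tail_shift]
  simp only [Function.comp, hst, redZ]
  congr 1
  simp only [mst]; ring

end

/-! ### Transducers following a map of the full shift -/

/-- The transducer `T` computes the map `f`: reading `x` from left to right, it is in state
`s x i` just before reading `x i`, and the letters written from then on fill the coordinates of
`f x` from `c x i` onwards. -/
structure Track (T : Transducer n) (f : FullShift n → FullShift n)
    (s : FullShift n → ℤ → T.Q) (c : FullShift n → ℤ → ℤ) : Prop where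
  tr : ∀ x i, T.tr (x i) (s x i) = s x (i + 1)
  len : ∀ x i, c x (i + 1) = c x i + (T.out (x i) (s x i)).length
  val : ∀ x i, tail (f x) (c x i) = hmap T (s x i) (tail x i)

section

variable {T U : Transducer n} {f g : FullShift n → FullShift n}
  {s : FullShift n → ℤ → T.Q} {c : FullShift n → ℤ → ℤ}
  {t : FullShift n → ℤ → U.Q} {d : FullShift n → ℤ → ℤ}

lemma tk_tail_succ (x : FullShift n) (i : ℤ) (k : ℕ) :
    tk (tail x i) (k + 1) = x i :: tk (tail x (i + 1)) k := by
  rw [tail_succ, tk_cons_app]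

lemma Track.path (H : Track T f s c) (x : FullShift n) (i : ℤ) (k : ℕ) :
    dsts T (tk (tail x i) k) (s x i) = s x (i + k) ∧
      c x (i + k) = c x i + (outs T (tk (tail x i) k) (s x i)).length := by
  induction k generalizing i with
  | zero => simp [tk, dsts, outs]
  | succ k ih =>
    obtain ⟨h1, h2⟩ := ih (i + 1)
    have e : i + ((k + 1 : ℕ) : ℤ) = i + 1 + k := by push_cast; ring
    rw [tk_tail_succ, e]
    simp only [dsts, outs, H.tr, List.length_append]
    refine ⟨h1, ?_⟩
    rw [h2, H.len]; push_cast; ring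

lemma Track.outs_eq (H : Track T f s c) (hP : Productive T) (x : FullShift n) (i : ℤ) (k : ℕ) :
    outs T (tk (tail x i) k) (s x i) =
      tk (tail (f x) (c x i)) (outs T (tk (tail x i) k) (s x i)).length := by
  refine app_eq_tk (z := hmap T (s x (i + k)) (tail x (i + k))) ?_
  rw [H.val, ← (H.path x i k).1, ← (isH_hmap hP).word, ← tail_add]

/-- A pair of states, as a state of the product. -/
def pmk (p : T.Q) (q : U.Q) : (prodT T U).Q := (p, q)

lemma Track.prod (H : Track T f s c) (K : Track U g t d) (hP : Productive T)
    (x : FullShift n) (i : ℤ) (k : ℕ) :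
    dsts (prodT T U) (tk (tail x i) k) (pmk (s x i) (t (f x) (c x i))) =
      pmk (s x (i + k)) (t (f x) (c x (i + k))) := by
  refine (prodT_dsts T U _ _).trans ?_
  change pmk (dsts T (tk (tail x i) k) (s x i))
    (dsts U (outs T (tk (tail x i) k) (s x i)) (t (f x) (c x i))) = _
  obtain ⟨h1, h2⟩ := H.path x i k
  rw [h1, H.outs_eq hP, (K.path _ _ _).1, h2]

/-- The core states of a product are the pairs of states reached by following the two maps. -/
lemma Track.coreState (H : Track T f s c) (K : Track U g t d) (hP : Productive T)
    (hs : StronglySync (prodT T U)) (p : (prodT T U).Q) :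
    CoreState (prodT T U) p ↔ ∃ x i, pmk (s x i) (t (f x) (c x i)) = p := by
  constructor
  · rintro ⟨k, w, -, hw, hp⟩
    let x : FullShift n := join (fun _ => 0) (app w fun _ => 0)
    refine ⟨x, 0 + (k : ℕ), ?_⟩
    rw [← H.prod K hP, tail_join, ← hw, tk_app]
    exact hp _
  · rintro ⟨x, i, rfl⟩
    obtain ⟨k, hk⟩ := hs
    have := H.prod K hP x (i - k) k
    rw [sub_add_cancel] at this
    rw [← this]
    exact coreState_of_word hk (by simp) _

end

/-! ### The transducer of an automorphism -/

lemma hst_finite {f g : FullShift n → FullShift n} {r : ℕ} (G : Good f g r) :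
    (Set.range (hst f)).Finite := by
  let I := Set.Ico (-(2 * r : ℤ)) 0
  refine (Set.finite_range fun w : I → A n =>
    hst f fun i => if hi : i ∈ I then w ⟨i, hi⟩ else default).subset ?_
  rintro _ ⟨x, rfl⟩
  refine ⟨fun i => x i, (G.congr fun i h1 h2 => ?_).1⟩
  have : i ∈ I := ⟨h1, h2⟩
  simp [this]

lemma hst_step {f g : FullShift n → FullShift n} {r : ℕ} (G : Good f g r) (x : FullShift n)
    (a : A n) : ∃ y, red (fun t => hst f x (app [a] t)) = hst f y := by
  let z := join x (app [a] fun _ => 0)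
  have h := (G.step z 0).1
  have hz : z 0 = a := by simp [z, join, app]
  have hx : hst f z = hst f x := (G.congr_past fun i hi => join_neg hi _).1
  have h0 : sst f z 0 = hst f x := by simp [sst, hx]
  rw [hz, h0] at h
  exact ⟨_, h⟩

/-- The transducer whose states are the local states of an automorphism of the shift. -/
noncomputable def autT (f : FullShift n → FullShift n) (hf : ∃ g r, Good f g r) :
    Transducer n where
  Q := Set.range (hst f)
  fin := by obtain ⟨g, r, G⟩ := hf; exact hst_finite G
  ne := ⟨⟨_, fun _ => 0, rfl⟩⟩
  tr := fun a q => ⟨red fun t => q.1 (app [a] t), by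
    obtain ⟨g, r, G⟩ := hf
    obtain ⟨q, x, rfl⟩ := q
    obtain ⟨y, hy⟩ := hst_step G x a
    exact ⟨y, hy.symm⟩⟩
  out := fun a q => tk (q.1 (app [a] fun _ => 0)) (ext fun t => q.1 (app [a] t))

section

variable {f : FullShift n → FullShift n} (hf : ∃ g r, Good f g r)

/-- The local state at time `i`, as a state of the transducer of `f`. -/
noncomputable def sts (x : FullShift n) (i : ℤ) : (autT f hf).Q := ⟨sst f x i, _, rfl⟩

/-- The map of one-sided sequences which a state of the transducer of `f` is. -/
def stv (q : (autT f hf).Q) : (ℕ → A n) → (ℕ → A n) := Subtype.val q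

lemma stv_inj {p q : (autT f hf).Q} (h : stv hf p = stv hf q) : p = q := Subtype.ext h

lemma stv_sts (x : FullShift n) (i : ℤ) : stv hf (sts hf x i) = sst f x i := rfl

lemma exists_sts (q : (autT f hf).Q) : ∃ x, sts hf x 0 = q := by
  obtain ⟨q, x, rfl⟩ := q
  exact ⟨x, stv_inj hf (by rw [stv_sts, sst]; simp; rfl)⟩

lemma isH_stv : IsH (autT f hf) (stv hf) := fun q a x =>
  app_red (fun t => stv hf q (app [a] t)) (fun _ => 0) x

lemma sts_tr (x : FullShift n) (i : ℤ) :
    (autT f hf).tr (x i) (sts hf x i) = sts hf x (i + 1) := by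
  obtain ⟨g, r, G⟩ := id hf
  exact stv_inj hf (G.step x i).1

lemma sts_len (x : FullShift n) (i : ℤ) :
    cst f x (i + 1) = cst f x i + ((autT f hf).out (x i) (sts hf x i)).length := by
  obtain ⟨g, r, G⟩ := id hf
  rw [(G.step x i).2]
  congr 2
  exact (tk_length _ _).symm

/-- Any word can be read along a bi-infinite sequence passing through a given state. -/
lemma exists_sts_word (q : (autT f hf).Q) (w : Word n) :
    ∃ x, sts hf x 0 = q ∧ tk (tail x 0) w.length = w := by
  obtain ⟨g, r, G⟩ := id hf
  obtain ⟨x, rfl⟩ := exists_sts hf q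
  refine ⟨join x (app w fun _ => 0), stv_inj hf ?_, by rw [tail_join, tk_app]⟩
  exact (G.sst_congr fun j _ h => join_neg h _).1

/-- Along any word the lengths of input and output differ by a bounded amount. -/
lemma autT_len_bound : ∃ B : ℕ, ∀ (q : (autT f hf).Q) (w : Word n),
    ((outs (autT f hf) w q).length : ℤ) ≤ w.length + B ∧
      (w.length : ℤ) ≤ (outs (autT f hf) w q).length + B := by
  obtain ⟨g, r, G⟩ := id hf
  refine ⟨2 * r, fun q w => ?_⟩
  obtain ⟨x, rfl, hw⟩ := exists_sts_word hf q w
  have key : ∀ (k : ℕ) (i : ℤ), cst f x (i + k) =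
      cst f x i + (outs (autT f hf) (tk (tail x i) k) (sts hf x i)).length := by
    intro k
    induction k with
    | zero => simp [tk, outs]
    | succ k ih =>
      intro i
      have e : i + ((k + 1 : ℕ) : ℤ) = i + 1 + k := by push_cast; ring
      rw [tk_tail_succ, e, ih]
      simp only [outs, sts_tr, List.length_append]
      rw [sts_len hf]; push_cast; ring
  have := key w.length 0
  rw [hw] at this
  have hc : ∀ i, i - r ≤ cst f x i ∧ cst f x i ≤ i + r := fun i => by
    have h1 := G.mst_lower (shiftZ (-i) x)
    have h2 := G.mst_upper (shiftZ (-i) x)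
    simp only [cst]; omega
  have h1 := hc 0
  have h2 := hc (0 + w.length)
  omega

lemma autT_uniProd : ∃ N, UniProd (autT f hf) N := by
  obtain ⟨B, hB⟩ := autT_len_bound hf
  refine ⟨B + 1, fun w q hw => List.ne_nil_of_length_pos ?_⟩
  have := (hB q w).2
  omega

lemma autT_productive : Productive (autT f hf) :=
  let ⟨_, h⟩ := autT_uniProd hf
  h.productive

lemma autT_hmap (q : (autT f hf).Q) : hmap (autT f hf) q = stv hf q :=
  hmap_eq_of_isH (autT_productive hf) (isH_stv hf) q

lemma autT_track : Track (autT f hf) f (sts hf) (cst f) where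
  tr := sts_tr hf
  len := sts_len hf
  val := fun x i => by
    obtain ⟨g, r, G⟩ := id hf
    rw [autT_hmap, stv_sts, G.val]

lemma autT_sync : StronglySync (autT f hf) := by
  obtain ⟨g, r, G⟩ := id hf
  refine ⟨2 * r, fun w hw p q => ?_⟩
  obtain ⟨x, rfl, hx⟩ := exists_sts_word hf p w
  obtain ⟨y, rfl, hy⟩ := exists_sts_word hf q w
  conv_lhs => rw [← hx, ((autT_track hf).path x 0 _).1]
  conv_rhs => rw [← hy, ((autT_track hf).path y 0 _).1]
  refine stv_inj hf (G.sst_congr fun j h1 h2 => ?_).1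
  have e := hx.trans hy.symm
  have h3 := tk_get (tail x 0) (k := w.length) (j := j.toNat) (by omega) default
  have h4 := tk_get (tail y 0) (k := w.length) (j := j.toNat) (by omega) default
  rw [e, h4] at h3
  simp only [tail] at h3
  rw [show (0 : ℤ) + (j.toNat : ℤ) = j by omega] at h3
  exact h3.symm

lemma autT_isCore : IsCore (autT f hf) := by
  obtain ⟨k, hk⟩ := autT_sync hf
  intro q
  obtain ⟨x, rfl⟩ := exists_sts hf q
  have := ((autT_track hf).path x (-k) k).1
  rw [neg_add_cancel] at this
  rw [← this]
  exact coreState_of_word hk (by simp) _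

/-- Powers of a word. -/
def pw (w : Word n) : ℕ → Word n
  | 0 => []
  | k + 1 => w ++ pw w k

lemma pw_length (w : Word n) (k : ℕ) : (pw w k).length = k * w.length := by
  induction k with
  | zero => simp [pw]
  | succ k ih => simp [pw, ih]; ring

lemma circuit_pw {T : Transducer n} {q : T.Q} {w : Word n} (h : dsts T w q = q) (k : ℕ) :
    dsts T (pw w k) q = q ∧ outs T (pw w k) q = pw (outs T w q) k := by
  induction k with
  | zero => exact ⟨rfl, rfl⟩
  | succ k ih => simp [pw, dsts_append, outs_append, h, ih.1, ih.2]

/-- Otherwise the difference between the lengths of input and output would be unbounded along the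
powers of a circuit. -/
lemma autT_sl3 : SL3 (autT f hf) := by
  intro q w hw
  obtain ⟨B, hB⟩ := autT_len_bound hf
  have h := hB q (pw w (B + 1))
  rw [(circuit_pw hw _).2, pw_length, pw_length] at h
  push_cast at h
  by_contra hne
  rcases lt_or_gt_of_ne hne with hlt | hlt
  · have : ((outs (autT f hf) w q).length : ℤ) + 1 ≤ w.length := by exact_mod_cast hlt
    nlinarith [h.2]
  · have : (w.length : ℤ) + 1 ≤ (outs (autT f hf) w q).length := by exact_mod_cast hlt
    nlinarith [h.1]

lemma circuitsNonempty_of_sl3 {T : Transducer n} (h : SL3 T) : CircuitsNonempty T := by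
  intro q w hw hq ho
  have := h q w hq
  rw [ho] at this
  exact hw (List.length_eq_zero_iff.1 this.symm)

lemma autT_weaklyMinimal : WeaklyMinimal (autT f hf) := fun p q h => by
  rw [autT_hmap, autT_hmap] at h
  exact stv_inj hf h

lemma autT_soN : SOnMem (autT f hf) := by
  obtain ⟨g, r, G⟩ := id hf
  refine ⟨⟨circuitsNonempty_of_sl3 (autT_sl3 hf), autT_sync hf, autT_isCore hf,
    Or.inl ⟨fun q => ?_, autT_weaklyMinimal hf⟩⟩, fun q => ?_⟩
  · obtain ⟨x, rfl⟩ := exists_sts hf q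
    have := G.hst_nc (shiftZ (-0) x)
    change NC (hmap _ _) 0
    rw [autT_hmap]; exact this
  · obtain ⟨x, rfl⟩ := exists_sts hf q
    rw [autT_hmap]
    exact ⟨G.hst_injective _, G.hst_clopen _⟩

lemma autT_range : Set.range (hmap (autT f hf)) = Set.range (hst f) := by
  ext φ
  constructor
  · rintro ⟨q, rfl⟩
    obtain ⟨x, rfl⟩ := exists_sts hf q
    rw [autT_hmap]; exact ⟨_, rfl⟩
  · rintro ⟨x, rfl⟩
    exact ⟨sts hf x 0, by rw [autT_hmap, stv_sts]; simp [sst]⟩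

lemma autT_nice : Nice (autT f hf) :=
  ⟨autT_sync hf, autT_uniProd hf, fun q => ((autT_soN hf).2 q).1⟩

end

/-- The transducer of a composition is the product of the transducers. -/
lemma autT_comp {f g h : FullShift n → FullShift n} (hf : ∃ f' r, Good f f' r)
    (hg : ∃ g' r, Good g g' r) (hh : ∃ h' r, Good h h' r) (e : ∀ x, h x = g (f x)) :
    OmegaEq (autT h hh) (mulT (autT f hf) (autT g hg)) := by
  obtain ⟨N, hN⟩ := autT_uniProd hf
  obtain ⟨f', r, F⟩ := id hf
  obtain ⟨g', r', G⟩ := id hg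
  obtain ⟨h', r'', H⟩ := id hh
  have hs := prodT_sync hN (autT_sync hf) (autT_sync hg)
  obtain ⟨h1, h2⟩ := mul_spec (autT_nice hf) (autT_nice hg)
  refine omegaEq_of_range (autT_weaklyMinimal hh) h1 ?_
  rw [h2, autT_range]
  ext φ
  simp only [Set.mem_range, Set.mem_ofPred_eq,
    (autT_track hf).coreState (autT_track hg) hN.productive hs]
  constructor
  · rintro ⟨x, rfl⟩
    refine ⟨_, ⟨x, 0, rfl⟩, ?_⟩
    rw [autT_hmap, autT_hmap]
    have := F.comp_sst G H e x 0
    simpa [pmk, stv_sts, sst] using this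
  · rintro ⟨_, ⟨x, i, rfl⟩, rfl⟩
    rw [autT_hmap, autT_hmap]
    exact ⟨_, (F.comp_sst G H e x i).symm⟩

lemma good_id : Good (id : FullShift n → FullShift n) id 0 :=
  ⟨fun x y m h => h m (by simp) (by simp), fun x y m h => h m (by simp) (by simp),
    fun _ _ => rfl, fun _ _ => rfl, fun _ => rfl, fun _ => rfl⟩

lemma hst_id (x : FullShift n) : hst id x = id := by
  have h := redZ_eq (F := fun t => id (join x t)) (c := 0)
    (fun m s t h => by simpa using good_id.lower x m s t h) (good_id.exists_ne' x)
  rw [hst, ← h.2]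
  have e : (fun t => tail (id (join x t)) 0) = id := funext fun t => tail_join x t
  rw [e]
  exact red_of_nc ⟨fun _ => 0, fun _ => 1, by simp⟩

lemma OmegaEq.symm {T U : Transducer n} (h : OmegaEq T U) : OmegaEq U T := by
  obtain ⟨f, hf⟩ := h
  exact ⟨f.symm, fun q => by rw [hf, Equiv.apply_symm_apply]⟩

lemma autT_mul_one {f g : FullShift n → FullShift n} (hf : ∃ f' r, Good f f' r)
    (hg : ∃ g' r, Good g g' r) (e : ∀ x, g (f x) = x) :
    OmegaEq (mulT (autT f hf) (autT g hg)) oneT := by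
  have hi : ∃ g r, Good (id : FullShift n → FullShift n) g r := ⟨_, _, good_id⟩
  have h := (autT_comp hf hg hi fun x => (e x).symm).range
  refine omegaEq_of_range (mul_spec (autT_nice hf) (autT_nice hg)).1 oneT_weaklyMinimal ?_
  rw [← h, oneT_range, autT_range]
  have : hst (id : FullShift n → FullShift n) = fun _ => id := funext hst_id
  rw [this, Set.range_const]

lemma autT_lnMem {f : FullShift n → FullShift n} (hf : ∃ g r, Good f g r) : LnMem (autT f hf) := by
  obtain ⟨g, r, G⟩ := id hf
  have hg : ∃ f r, Good g f r := ⟨f, r, G.symm⟩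
  exact ⟨⟨autT_soN hf, autT g hg, autT_soN hg, autT_mul_one hf hg G.gf, autT_mul_one hg hf G.fg⟩,
    autT_sl3 hf⟩

/-! ### Automorphisms with the same transducer -/

/-- The displacement of the output relative to the input only depends on finitely many letters, so
two sequences can be joined to compare the displacements at both. -/
lemma const_of_invariant {δ : FullShift n → ℤ → ℤ} {k : ℕ}
    (h1 : ∀ x (i : ℤ), δ x (i + 1) = δ x i)
    (h2 : ∀ x y (i : ℤ), (∀ j : ℤ, i - k ≤ j → j < i → x j = y j) → δ x i = δ y i) (x y : FullShift n)
    (i j : ℤ) : δ x i = δ y j := by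
  have h3 : ∀ x i, δ x i = δ x 0 := fun x i => by
    induction i using Int.induction_on with
    | zero => rfl
    | succ i ih => rw [h1, ih]
    | pred i ih => rw [← ih, ← h1 x (-i - 1)]; congr 1; ring
  let z := join x (tail y 0)
  rw [h3 x, h3 y, h2 x z 0 fun j _ hj => (join_neg hj _).symm, ← h3 z k, ← h3 y k]
  refine h2 z y k fun j hj _ => ?_
  have : j = (j.toNat : ℤ) := by omega
  rw [this]
  simp only [z, join_nonneg, tail, zero_add]

lemma autT_eq_iff {f g : FullShift n → FullShift n} (hf : ∃ f' r, Good f f' r)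
    (hg : ∃ g' r, Good g g' r) :
    OmegaEq (autT f hf) (autT g hg) ↔ ∃ i : ℤ, ∀ x, f x = shiftZ i (g x) := by
  obtain ⟨f', r, F⟩ := id hf
  obtain ⟨g', r', G⟩ := id hg
  constructor
  · intro h
    obtain ⟨e, he⟩ := h
    simp only [autT_hmap] at he
    have hv : ∀ q, stv hg (e q) = stv hf q := fun q => (he q).symm
    have het : ∀ a q, e ((autT f hf).tr a q) = (autT g hg).tr a (e q) := fun a q => by
      apply stv_inj hg
      rw [hv]
      change red (fun t => stv hf q (app [a] t)) = red (fun t => stv hg (e q) (app [a] t))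
      rw [hv]
    have hed : ∀ w q, e (dsts (autT f hf) w q) = dsts (autT g hg) w (e q) := fun w => by
      induction w with
      | nil => intro q; rfl
      | cons a w ih => intro q; rw [dsts, ih, het]; rfl
    obtain ⟨k, hk⟩ := autT_sync hg
    -- by synchronization, both transducers follow the same local states
    have hst : ∀ x i, sst f x i = sst g x i := fun x i => by
      have h1 := ((autT_track hf).path x (i - k) k).1
      have h2 := ((autT_track hg).path x (i - k) k).1
      rw [sub_add_cancel] at h1 h2
      rw [← stv_sts hf, ← stv_sts hg, ← hv, ← h1, hed, ← h2]
      exact congrArg _ (hk _ (by simp) _ _)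
    have hd : ∀ x i, cst f x (i + 1) - cst g x (i + 1) = cst f x i - cst g x i := fun x i => by
      rw [(F.step x i).2, (G.step x i).2, hst]; ring
    have hc := const_of_invariant (δ := fun x i => cst f x i - cst g x i) (k := 2 * max r r') hd
      (fun x y i hxy => by
        rw [(F.sst_congr fun j h1 h2 => hxy j (by push_cast; omega) h2).2,
          (G.sst_congr fun j h1 h2 => hxy j (by push_cast; omega) h2).2])
    refine ⟨cst f (fun _ => 0) 0 - cst g (fun _ => 0) 0, fun x => ?_⟩
    funext m
    -- choose a time at which the coordinate `m` has not been written yet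
    set i := m - r with hi
    have hci : cst f x i ≤ m := by
      have := F.mst_upper (shiftZ (-i) x)
      simp only [cst]; omega
    have h1 := congrFun (F.val x i) (m - cst f x i).toNat
    have h2 := congrFun (G.val x i) (m - cst f x i).toNat
    rw [hst, ← h2] at h1
    simp only [tail] at h1
    have h3 := hc (fun _ => 0) x 0 i
    simp only [shiftZ]
    change _ = cst f x i - cst g x i at h3
    rw [h3]
    convert h1 using 2 <;> omega
  · rintro ⟨i, hi⟩
    refine omegaEq_of_range (autT_weaklyMinimal hf) (autT_weaklyMinimal hg) ?_
    rw [autT_range, autT_range]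
    congr 1
    funext x
    have e : (fun t => f (join x t)) = fun t => shiftZ i (g (join x t)) := funext fun t => hi _
    rw [hst, e]
    exact (redZ_shift (G.lower x) (G.exists_ne' x) i).2

/-! ### Elements of `L_n` -/

/-- The degenerate transducers induce constant maps, hence do not belong to `SO_n`. -/
lemma SOnMem.nondegenerate {T : Transducer n} (h : SOnMem T) : NoIncomplete T ∧ WeaklyMinimal T := by
  obtain ⟨⟨-, -, -, h | ⟨w, -, -, e, he⟩⟩, hinj⟩ := h
  · exact h
  · exfalso
    obtain ⟨q⟩ := T.ne
    have hlen : ∀ (u v : Word n) (p : (Zword w).Q), u.length = v.length →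
        outs (Zword w) u p = outs (Zword w) v p := by
      intro u
      induction u with
      | nil => intro v p huv; rw [List.length_eq_zero_iff.1 huv.symm]
      | cons a u ih =>
        intro v p huv
        cases v with
        | nil => simp at huv
        | cons b v => exact congrArg (w ++ ·) (ih v p (by simpa using huv))
    have hconst : ∀ x y : ℕ → A n, hmap T q x = hmap T q y := fun x y => by
      rw [he]
      funext m
      have ho : ∀ k, outs (Zword w) (tk x k) (e q) = outs (Zword w) (tk y k) (e q) :=
        fun k => hlen _ _ _ (by simp)
      by_cases h : ∃ k, m < (outs (Zword w) (tk x k) (e q)).length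
      · obtain ⟨k, hk⟩ := h
        rw [hmap_val hk, hmap_val (ho k ▸ hk), ho]
      · have h' : ¬ ∃ k, m < (outs (Zword w) (tk y k) (e q)).length := by simpa only [ho] using h
        have h1 : hmap (Zword w) (e q) x m = default := dif_neg h
        have h2 : hmap (Zword w) (e q) y m = default := dif_neg h'
        rw [h1, h2]
    have := congrFun ((hinj q).1 (hconst (fun _ => 0) fun _ => 1)) 0
    simp at this

lemma SOnMem.nice {T : Transducer n} (h : SOnMem T) : Nice T :=
  ⟨h.1.2.1, uniProd_of_circuits h.1.1, fun q => (h.2 q).1⟩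

lemma red_eq_id {T U : Transducer n} (hT : Nice T) (hU : Nice U)
    (h : OmegaEq (mulT T U) oneT) (c : (prodT T U).Q) (hc : CoreState (prodT T U) c) :
    red (hmap U c.2 ∘ hmap T c.1) = id := by
  have h1 := h.range
  rw [(mul_spec hT hU).2, oneT_range] at h1
  have h2 : red (hmap U c.2 ∘ hmap T c.1) ∈ ({id} : Set ((ℕ → A n) → (ℕ → A n))) := by
    rw [← h1]; exact ⟨c, hc, rfl⟩
  exact h2

lemma pw_add (w : Word n) (a b : ℕ) : pw w (a + b) = pw w a ++ pw w b := by
  induction a with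
  | zero => simp [pw]
  | succ a ih => rw [Nat.succ_add]; simp [pw, ih]

/-- If `h_p ∘ h_q` only prepends a word, then it is length preserving along circuits. -/
lemma length_of_red {T U : Transducer n} (hT : Productive T) (hU : Productive U) {q : U.Q} {p : T.Q}
    (h : red (hmap T p ∘ hmap U q) = id) {w : Word n} (hq : dsts U w q = q)
    (hp : dsts T (outs U w q) p = p) : (outs T (outs U w q) p).length = w.length := by
  have hv : ∀ t, hmap T p (hmap U q t) =
      app (tk ((hmap T p ∘ hmap U q) fun _ => 0) (ext (hmap T p ∘ hmap U q))) t := fun t => by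
    have := app_red (hmap T p ∘ hmap U q) (fun _ => 0) t
    rwa [h] at this
  generalize tk ((hmap T p ∘ hmap U q) fun _ => 0) (ext (hmap T p ∘ hmap U q)) = v at hv
  have key : ∀ t, app (outs T (outs U w q) p ++ v) t = app (v ++ w) t := fun t => by
    rw [app_append, app_append, ← hv, ← hv, (isH_hmap hU).word, (isH_hmap hT).word, hq, hp]
  have := length_eq_of_app key
  simp only [List.length_append] at this
  omega

/-- The Lipschitz condition passes to inverses: along a circuit of `U`, the output of `U` is
followed by `T` around a circuit, after passing to a power. -/
lemma sl3_inverse {T U : Transducer n} (hT : SOnMem T) (hU : SOnMem U)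
    (h : OmegaEq (mulT U T) oneT) (hL : SL3 T) : SL3 U := by
  intro q w hw
  obtain ⟨N, hN⟩ := hU.nice.prod
  obtain ⟨M, hM⟩ := hT.nice.prod
  obtain ⟨K, hK⟩ := prodT_sync hN hU.nice.sync hT.nice.sync
  obtain ⟨k, u, -, -, hu⟩ := hU.1.2.2.1 q
  obtain ⟨p0, hp0⟩ : ∃ p, CoreState (prodT U T) (pmk q p) := by
    obtain ⟨z⟩ := (prodT U T).ne
    have := coreState_of_word hK (w := List.replicate K 0 ++ u) (by simp) z
    rw [prodT_dsts, dsts_append, hu] at this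
    exact ⟨_, this⟩
  obtain ⟨P, hPd⟩ : ∃ P : ℕ → T.Q, ∀ m, P m = dsts T (pw (outs U w q) m) p0 := ⟨_, fun _ => rfl⟩
  have hP : ∀ m, CoreState (prodT U T) (pmk q (P m)) := fun m => by
    have := hp0.dsts (pw w m)
    rw [prodT_dsts] at this
    change CoreState (prodT U T) (pmk (dsts U (pw w m) q) (dsts T (outs U (pw w m) q) p0)) at this
    rwa [(circuit_pw hw m).1, (circuit_pw hw m).2, ← hPd] at this
  obtain ⟨a, b, hab, he⟩ := Finite.exists_ne_map_eq_of_infinite P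
  wlog hlt : a < b generalizing a b
  · exact this b a hab.symm he.symm (by omega)
  obtain ⟨d, rfl⟩ := Nat.exists_eq_add_of_lt hlt
  have hcirc : dsts T (pw (outs U w q) (d + 1)) (P a) = P a := by
    conv_rhs => rw [he]
    rw [hPd, hPd, add_assoc, pw_add _ a (d + 1), dsts_append]
  have h1 := hL _ _ hcirc
  have h3 : red (hmap T (P a) ∘ hmap U q) = id :=
    red_eq_id hU.nice hT.nice h (pmk q (P a)) (hP a)
  have h2 := length_of_red hM.productive hN.productive h3 (circuit_pw hw (d + 1)).1
    (by rw [(circuit_pw hw _).2]; exact hcirc)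
  rw [(circuit_pw hw _).2] at h2
  rw [h1, pw_length, pw_length] at h2
  exact Nat.eq_of_mul_eq_mul_left (Nat.succ_pos d) h2

/-- The Lipschitz condition says that the lengths of input and output define a potential on the
states. -/
lemma exists_annotation {T : Transducer n} (hc : IsCore T) (hL : SL3 T) :
    ∃ α : T.Q → ℤ, ∀ a q, α (T.tr a q) = α q + (T.out a q).length - 1 := by
  obtain ⟨q0⟩ := T.ne
  have hr : ∀ q, ∃ w, ∀ p, dsts T w p = q := fun q => by
    obtain ⟨_, w, -, -, hw⟩ := hc q
    exact ⟨w, hw⟩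
  choose w hw using hr
  refine ⟨fun q => ((outs T (w q) q0).length : ℤ) - (w q).length, fun a q => ?_⟩
  have h1 := hL q0 (w q ++ ([a] ++ w q0)) (by rw [dsts_append, dsts_append, hw])
  have h2 := hL q0 (w (T.tr a q) ++ w q0) (by simp [dsts_append, hw])
  simp only [outs_append, hw, List.length_append, outs, dsts, List.append_nil,
    List.length_singleton] at h1 h2
  simp only []
  omega

/-! ### The map of the full shift induced by an annotated transducer -/

section

variable (T : Transducer n) (α : T.Q → ℤ) (k B : ℕ)

/-- The state of `T` forced by the `k` letters of `x` before the coordinate `i`. -/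
noncomputable def fst (x : FullShift n) (i : ℤ) : T.Q :=
  dsts T (tk (tail x (i - k)) k) (Classical.choice T.ne)

/-- The coordinate of the image at which the letters written from time `i` on begin. -/
noncomputable def fco (x : FullShift n) (i : ℤ) : ℤ := i + α (fst T k x i)

/-- The coordinate `m` of the image, computed from time `i` on. -/
noncomputable def fval (x : FullShift n) (i m : ℤ) : A n :=
  hmap T (fst T k x i) (tail x i) (m - fco T α k x i).toNat

/-- The map of the full shift induced by `T` with annotation `α` bounded by `B`. -/
noncomputable def fmap (x : FullShift n) : FullShift n := fun m => fval T α k x (m - B) m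

variable {T α k B} {N : ℕ}

lemma fst_congr {x y : FullShift n} {i : ℤ} (h : ∀ j : ℤ, i - k ≤ j → j < i → x j = y j) :
    fst T k x i = fst T k y i := by
  unfold fst
  congr 1
  simp only [tk]
  refine List.map_congr_left fun j hj => ?_
  have := List.mem_range.1 hj
  exact h _ (by omega) (by omega)

lemma fst_shift (x : FullShift n) (d i : ℤ) : fst T k (shiftZ d x) i = fst T k x (i - d) := by
  unfold fst
  rw [tail_shift]
  congr 3
  ring

lemma fst_tr (hk : SyncAt T k) (x : FullShift n) (i : ℤ) :
    T.tr (x i) (fst T k x i) = fst T k x (i + 1) := by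
  have h1 : dsts T (tk (tail x (i - k)) (k + 1)) (Classical.choice T.ne) =
      T.tr (x i) (fst T k x i) := by
    rw [tk_succ', dsts_append]
    simp [dsts, fst, tail]
  rw [← h1, tk_tail_succ, dsts, show i - (k : ℤ) + 1 = i + 1 - k by ring]
  exact hk _ (by simp) _ _

lemma fco_succ (hk : SyncAt T k) (hα : ∀ a q, α (T.tr a q) = α q + (T.out a q).length - 1)
    (x : FullShift n) (i : ℤ) :
    fco T α k x (i + 1) = fco T α k x i + (T.out (x i) (fst T k x i)).length := by
  unfold fco
  rw [← fst_tr hk, hα]; ring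

lemma fval_add (hk : SyncAt T k) (hN : UniProd T N)
    (hα : ∀ a q, α (T.tr a q) = α q + (T.out a q).length - 1) (x : FullShift n) (i m : ℤ) (j : ℕ)
    (h : fco T α k x (i + j) ≤ m) : fval T α k x i m = fval T α k x (i + j) m := by
  induction j generalizing i with
  | zero => simp
  | succ j ih =>
    have e : i + ((j + 1 : ℕ) : ℤ) = i + 1 + j := by push_cast; ring
    rw [e] at h ⊢
    rw [← ih _ h]
    have hle : ∀ (j : ℕ) (i : ℤ), fco T α k x i ≤ fco T α k x (i + j) := by
      intro j
      induction j with
      | zero => simp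
      | succ j ih =>
        intro i
        have := ih i
        rw [Nat.cast_succ, ← add_assoc, fco_succ hk hα]; omega
    have h1 := fco_succ hk hα x i
    have h2 := hle j (i + 1)
    unfold fval
    rw [tail_succ, isH_hmap hN.productive, fst_tr hk, ← app_add (T.out (x i) (fst T k x i))
      (hmap T (fst T k x (i + 1)) (tail x (i + 1)))]
    congr 1
    omega

/-- The coordinates of the image do not depend on the time from which they are computed. -/
lemma fval_eq (hk : SyncAt T k) (hN : UniProd T N)
    (hα : ∀ a q, α (T.tr a q) = α q + (T.out a q).length - 1) (x : FullShift n) (i i' m : ℤ)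
    (h : fco T α k x i ≤ m) (h' : fco T α k x i' ≤ m) :
    fval T α k x i m = fval T α k x i' m := by
  wlog hle : i ≤ i' generalizing i i'
  · exact (this i' i h' h (by omega)).symm
  obtain ⟨j, rfl⟩ := Int.le.dest hle
  exact fval_add hk hN hα x i m j h'

lemma fco_bound (hB : ∀ q, |α q| ≤ B) (x : FullShift n) (i : ℤ) :
    i - B ≤ fco T α k x i ∧ fco T α k x i ≤ i + B := by
  have := abs_le.1 (hB (fst T k x i))
  unfold fco; omega

lemma fmap_track (hk : SyncAt T k) (hN : UniProd T N)
    (hα : ∀ a q, α (T.tr a q) = α q + (T.out a q).length - 1) (hB : ∀ q, |α q| ≤ B) :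
    Track T (fmap T α k B) (fst T k) (fco T α k) where
  tr := fst_tr hk
  len := fco_succ hk hα
  val := fun x i => by
    funext j
    simp only [tail, fmap]
    have := (fco_bound (k := k) hB x (fco T α k x i + j - B)).2
    rw [fval_eq hk hN hα x _ i _ (by omega) (by omega), fval]
    congr 1
    omega

lemma fmap_comm : Comm (fmap T α k B) := fun d x => by
  funext m
  simp only [fmap, fval, shiftZ, fco, fst_shift, tail_shift]
  rw [show m - (B : ℤ) - d = m - d - B by ring]
  congr 1
  congr 1
  ring

lemma fmap_loc (hN : UniProd T N) (hB : ∀ q, |α q| ≤ B) :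
    Loc (fmap T α k B) (B + k + N * (2 * B + 1)) := by
  intro x y m h
  have hs : fst T k x (m - B) = fst T k y (m - B) :=
    fst_congr fun j h1 h2 => h j (by push_cast; nlinarith) (by push_cast; nlinarith)
  simp only [fmap, fval, fco, hs]
  have hb := abs_le.1 (hB (fst T k y (m - B)))
  refine hmap_congr (k := N * (2 * B + 1)) (fun w hw => ?_) fun j hj => ?_
  · have := hN.len (2 * B + 1) w (fst T k y (m - B)) hw.ge
    omega
  · have hj' : (j : ℤ) < N * (2 * B + 1) := by exact_mod_cast hj
    exact h _ (by push_cast; nlinarith) (by push_cast; nlinarith)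

/-- The local states of the induced map are the maps induced by the states of `T`. -/
lemma hst_fmap (hk : SyncAt T k) (hN : UniProd T N)
    (hα : ∀ a q, α (T.tr a q) = α q + (T.out a q).length - 1) (hB : ∀ q, |α q| ≤ B)
    (hI : NoIncomplete T) {g : FullShift n → FullShift n} {r : ℕ} (G : Good (fmap T α k B) g r)
    (x : FullShift n) : hst (fmap T α k B) x = hmap T (fst T k x 0) := by
  have H := fmap_track hk hN hα hB
  have hs : ∀ t (i : ℤ), i ≤ 0 → fst T k (join x t) i = fst T k x i := fun t i hi =>
    fst_congr fun j _ hj => join_neg (by omega) _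
  have hc : ∀ t (i : ℤ), i ≤ 0 → fco T α k (join x t) i = fco T α k x i := fun t i hi => by
    rw [fco, hs t i hi, fco]
  have hcut : ∀ m s t, fmap T α k B (join x s) m ≠ fmap T α k B (join x t) m →
      fco T α k x 0 ≤ m := by
    intro m s t
    contrapose!
    intro hm
    -- the coordinate `m` is written between the times `-K` and `0`
    obtain ⟨K, hK⟩ : ∃ K : ℕ, fco T α k x (-K) ≤ m := by
      refine ⟨(m - B).natAbs, ?_⟩
      have := (fco_bound (k := k) hB x (-((m - B).natAbs : ℤ))).2
      omega
    have hval : ∀ t, fmap T α k B (join x t) m =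
        (outs T (tk (tail x (-K)) K) (fst T k x (-K))).getD (m - fco T α k x (-K)).toNat
          default := fun t => by
      have e : tk (tail (join x t) (-K)) K = tk (tail x (-K)) K := by
        simp only [tk]
        refine List.map_congr_left fun j hj => ?_
        have := List.mem_range.1 hj
        exact join_neg (by omega) _
      have h1 := (H.path (join x t) (-K) K).2
      have h2 := H.outs_eq hN.productive (join x t) (-K) K
      rw [neg_add_cancel, hc t 0 le_rfl, e, hs t (-K) (by omega)] at h1
      rw [e, hs t (-K) (by omega), hc t (-K) (by omega)] at h2
      rw [hc t (-K) (by omega)] at h1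
      rw [h2, tk_get _ (by omega)]
      simp only [tail]
      congr 1
      omega
    rw [hval, hval]
  rw [hst, ← (redZ_eq hcut (G.exists_ne' x)).2]
  have e : (fun t => tail (fmap T α k B (join x t)) (fco T α k x 0)) = hmap T (fst T k x 0) := by
    funext t
    rw [← hc t 0 le_rfl, H.val, hs t 0 le_rfl, tail_join]
  rw [e]
  exact red_of_nc (hI _)

lemma fst_surjective (hk : SyncAt T k) (hc : IsCore T) (q : T.Q) : ∃ x, fst T k x 0 = q := by
  obtain ⟨_, w, -, -, hw⟩ := hc q
  have hpath : ∀ (w : Word n) (x : FullShift n) (i : ℤ), tk (tail x i) w.length = w →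
      dsts T w (fst T k x i) = fst T k x (i + w.length) := by
    intro w
    induction w with
    | nil => intro x i _; simp [dsts]
    | cons a w ih =>
      intro x i h
      rw [List.length_cons, tk_tail_succ] at h
      obtain ⟨h1, h2⟩ := List.cons.inj h
      rw [dsts, ← h1, fst_tr hk, ih x (i + 1) h2]
      congr 1
      simp only [List.length_cons]; push_cast; ring
  let x : FullShift n := join (fun _ => 0) (app w fun _ => 0)
  refine ⟨shiftZ (-w.length) x, ?_⟩
  rw [fst_shift, ← hw (fst T k x 0), hpath w x 0 (by rw [tail_join, tk_app])]
  congr 1; ring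

end

/-! ### Surjectivity onto `L_n` -/

/-- If the product of `T` and `U` is trivial, then the induced maps are inverse to each other up to
a power of the shift, the exponent being determined by the annotations and the extents of
incomplete response of the states of the product. -/
lemma comp_eq_shift {T U : Transducer n} {f g : FullShift n → FullShift n}
    {s : FullShift n → ℤ → T.Q} {c : FullShift n → ℤ → ℤ}
    {t : FullShift n → ℤ → U.Q} {d : FullShift n → ℤ → ℤ} {α : T.Q → ℤ} {β : U.Q → ℤ}
    (H : Track T f s c) (K : Track U g t d) (hT : Productive T) (hU : Productive U)
    (hc : ∀ x i, c x i = i + α (s x i)) (hd : ∀ x i, d x i = i + β (t x i))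
    (hs : StronglySync (prodT T U))
    (hred : ∀ c, CoreState (prodT T U) c → red (hmap U c.2 ∘ hmap T c.1) = id) :
    ∃ γ : ℤ, ∀ x, g (f x) = shiftZ γ x := by
  -- `δ x i` is the displacement of the output relative to the input at time `i`
  let e : T.Q → U.Q → ℕ := fun p q => ext (hmap U q ∘ hmap T p)
  let D : (prodT T U).Q → ℤ := fun p => α p.1 + β p.2 + e p.1 p.2
  let P : FullShift n → ℤ → (prodT T U).Q := fun x i => pmk (s x i) (t (f x) (c x i))
  let δ : FullShift n → ℤ → ℤ := fun x i => D (P x i)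
  have hδ : ∀ x i, i + δ x i = d (f x) (c x i) + e (s x i) (t (f x) (c x i)) := fun x i => by
    change i + (α (s x i) + β (t (f x) (c x i)) + (e (s x i) (t (f x) (c x i)) : ℤ)) = _
    rw [hd, hc]; ring
  have hv : ∀ x i, ∃ v : Word n, v.length = e (s x i) (t (f x) (c x i)) ∧
      ∀ z, hmap U (t (f x) (c x i)) (hmap T (s x i) z) = app v z := fun x i => by
    have h1 : red (hmap U (t (f x) (c x i)) ∘ hmap T (s x i)) = id :=
      hred (P x i) ((H.coreState K hT hs _).2 ⟨x, i, rfl⟩)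
    refine ⟨_, tk_length ((hmap U (t (f x) (c x i)) ∘ hmap T (s x i)) fun _ => 0) _, fun z => ?_⟩
    have := app_red (hmap U (t (f x) (c x i)) ∘ hmap T (s x i)) (fun _ => 0) z
    rwa [h1] at this
  have hstep : ∀ x (i : ℤ), δ x (i + 1) = δ x i := fun x i => by
    obtain ⟨v, hv1, hv2⟩ := hv x i
    obtain ⟨v', hv1', hv2'⟩ := hv x (i + 1)
    have hp := H.path x i 1
    have ho := H.outs_eq hT x i 1
    have e1 : tk (tail x i) 1 = [x i] := by simp [tk, tail]
    rw [Nat.cast_one, e1] at hp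
    rw [e1] at ho
    have hq := K.path (f x) (c x i) (outs T [x i] (s x i)).length
    rw [← ho, ← hp.2] at hq
    have key : ∀ z, app (v ++ [x i]) z =
        app (outs U (outs T [x i] (s x i)) (t (f x) (c x i)) ++ v') z := fun z => by
      rw [app_append, app_append, ← hv2, ← hv2', (isH_hmap hT).word, (isH_hmap hU).word, hp.1,
        hq.1]
    have hl := length_eq_of_app key
    simp only [List.length_append, List.length_singleton] at hl
    have h1 := hδ x i
    have h2 := hδ x (i + 1)
    rw [hq.2] at h2
    omega
  obtain ⟨k, hk⟩ := id hs
  have hconst := const_of_invariant (δ := δ) (k := k) hstep fun x y i hxy => by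
    have h1 := H.prod K hT x (i - k) k
    have h2 := H.prod K hT y (i - k) k
    rw [sub_add_cancel] at h1 h2
    have e : tk (tail x (i - k)) k = tk (tail y (i - k)) k := by
      simp only [tk]
      refine List.map_congr_left fun j hj => ?_
      have := List.mem_range.1 hj
      exact hxy _ (by omega) (by omega)
    have : P x i = P y i := by
      simp only [P]
      rw [← h1, ← h2, e]
      exact hk _ (by simp) _ _
    change D (P x i) = D (P y i)
    rw [this]
  refine ⟨δ (fun _ => 0) 0, fun x => ?_⟩
  funext m
  set γ := δ (fun _ => 0) 0 with hγ
  obtain ⟨v, hv1, hv2⟩ := hv x (m - γ)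
  have h1 := hδ x (m - γ)
  rw [hconst x (fun _ => 0) _ 0, ← hγ, ← hv1] at h1
  have h2 := congrFun (K.val (f x) (c x (m - γ))) (v.length + 0)
  rw [H.val, hv2, app_add] at h2
  simp only [tail, shiftZ] at h2 ⊢
  rw [← show d (f x) (c x (m - γ)) + ((v.length + 0 : ℕ) : ℤ) = m by push_cast; omega, h2]
  congr 1
  push_cast
  omega

lemma exists_aut {T : Transducer n} (hT : LnMem T) :
    ∃ f : AutShift n, ∀ hf, OmegaEq (autT f.1 hf) T := by
  obtain ⟨⟨hS, U, hSU, hTU, hUT⟩, hL⟩ := hT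
  have hLU := sl3_inverse hS hSU hUT hL
  obtain ⟨α, hα⟩ := exists_annotation hS.1.2.2.1 hL
  obtain ⟨β, hβ⟩ := exists_annotation hSU.1.2.2.1 hLU
  obtain ⟨N, hN⟩ := hS.nice.prod
  obtain ⟨M, hM⟩ := hSU.nice.prod
  obtain ⟨k, hk⟩ := hS.nice.sync
  obtain ⟨l, hl⟩ := hSU.nice.sync
  have hbound : ∀ {Q : Type} [Finite Q] (α : Q → ℤ), ∃ B : ℕ, ∀ q, |α q| ≤ B := fun α => by
    obtain ⟨b, hb⟩ := (Set.finite_range fun q => |α q|).bddAbove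
    exact ⟨b.toNat, fun q => (hb ⟨q, rfl⟩).trans (Int.self_le_toNat b)⟩
  obtain ⟨B, hB⟩ := hbound α
  obtain ⟨C, hC⟩ := hbound β
  have H := fmap_track hk hN hα hB
  have K := fmap_track hl hM hβ hC
  set f := fmap T α k B with hf
  set g := fmap U β l C with hg
  obtain ⟨γ, hγ⟩ := comp_eq_shift H K hN.productive hM.productive (fun _ _ => rfl) (fun _ _ => rfl)
    (prodT_sync hN hS.nice.sync hSU.nice.sync) (red_eq_id hS.nice hSU.nice hTU)
  obtain ⟨γ', hγ'⟩ := comp_eq_shift K H hM.productive hN.productive (fun _ _ => rfl)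
    (fun _ _ => rfl) (prodT_sync hM hSU.nice.sync hS.nice.sync) (red_eq_id hSU.nice hS.nice hUT)
  have hfc : Comm f := fmap_comm
  have hleft : ∀ x, shiftZ (-γ) (g (f x)) = x := fun x => by
    rw [hγ, shiftZ_shiftZ, neg_add_cancel, shiftZ_zero]
  have hsurj : ∀ y, ∃ x, f x = y := fun y => ⟨shiftZ (-γ') (g y), by
    rw [hfc, hγ', shiftZ_shiftZ, neg_add_cancel, shiftZ_zero]⟩
  have hright : ∀ y, f (shiftZ (-γ) (g y)) = y := fun y => by
    obtain ⟨x, rfl⟩ := hsurj y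
    rw [hleft]
  let F : AutShift n := ⟨f, (fmap_loc hN hB).continuous, hfc 1, fun x => shiftZ (-γ) (g x),
    (continuous_shiftZ _).comp (fmap_loc hM hC).continuous, hleft, hright⟩
  refine ⟨F, fun hF => ?_⟩
  obtain ⟨g', r, G⟩ := id hF
  obtain ⟨hI, hW⟩ := hS.nondegenerate
  refine omegaEq_of_range (autT_weaklyMinimal hF) hW ?_
  rw [autT_range]
  have e : hst F.1 = fun x => hmap T (fst T k x 0) := funext (hst_fmap hk hN hα hB hI G)
  rw [e]
  exact Function.Surjective.range_comp (fst_surjective hk hS.1.2.2.1) (hmap T)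

/-- The quotient of the group `Aut(X_n^ℤ, σ_n)` of automorphisms of the
two-sided full shift by the central subgroup `⟨σ_n⟩` generated by the shift is isomorphic,
as a group, to the transducer group `L_n`: there is a map `φ` from `Aut(X_n^ℤ, σ_n)` into
`L_n` (equality in `L_n` being ω-equality) which is multiplicative, surjective, and whose
fibres are exactly the cosets of `⟨σ_n⟩`. -/
theorem aut_mod_shift_iso_Ln (n : ℕ) :
    ∃ φ : AutShift n → Transducer n,
      (∀ f : AutShift n, LnMem (φ f)) ∧
      (∀ f g h : AutShift n, (∀ x, h.1 x = g.1 (f.1 x)) →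
        OmegaEq (φ h) (mulT (φ f) (φ g))) ∧
      (∀ T : Transducer n, LnMem T → ∃ f : AutShift n, OmegaEq (φ f) T) ∧
      (∀ f g : AutShift n,
        (OmegaEq (φ f) (φ g) ↔ ∃ i : ℤ, ∀ x, f.1 x = shiftZ i (g.1 x))) := by
  refine ⟨fun f => autT f.1 (exists_good f), fun f => autT_lnMem _,
    fun f g h e => autT_comp _ _ _ e, fun T hT => ?_, fun f g => autT_eq_iff _ _⟩
  obtain ⟨f, hf⟩ := exists_aut hT
  exact ⟨f, hf _⟩

end ShiftPaper
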